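/- arXiv:1611.09060 — 7 statements merged into one kernel-verified Lean document; each statement's English description precedes it below -/
import Mathlib

section
/- For integers ℓ ≥ k ≥ 1, if every subgraph H of a finite simple graph G has a vertex of degree at most k or an ℓ-light edge, then G is (k+1, ℓ−k)-choosable. -/
/-!
Fix lists `L` of size `k + 1` and put `d = ℓ - k`. Well-founded induction over the subgraphs `H`
of `G` produces a colouring from `L` of defect at most `d` on `H`.

If `H` has a vertex `v` of degree at most `k`, colour `H - v` and give `v` a colour of its list
missing from its neighbourhood. Otherwise `H` has an `ℓ`-light edge `uv`; colour `H - uv`. If this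
colouring has defect more than `d` on `H`, then the excess occurs at an end `w` of `uv`. At least
`ℓ - k + 1` of the at most `ℓ` neighbours of `w` share its colour, so at most `k - 1` do not, and
the closed neighbourhood of `w` sees at most `k` colours. Hence `w` can be recoloured with a colour
of its list that is missing from its neighbourhood, which also removes the conflict on `uv`.

Both cases end with the same move, `exists_recolouring`: giving a vertex a colour unused on its
neighbourhood leaves it with defect `0` and creates no conflict elsewhere.
-/

open SimpleGraph

universe u v

section Defs

variable {V : Type u} {α : Type v}

/-- `H` is isomorphic to a subgraph of `G`: there is an injective graph homomorphism. -/
def ContainsSubgraph (G : SimpleGraph V) (H : SimpleGraph α) : Prop :=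
  ∃ f : H →g G, Function.Injective f

/-- `G` is `(k,d)`-choosable: for every assignment of lists of exactly `k` colours there is a
colouring from the lists in which every vertex has at most `d` neighbours of its own colour. -/
def Choosable (G : SimpleGraph V) (k : ℕ) (d : ℤ) : Prop :=
  ∀ L : V → Finset ℕ, (∀ v, (L v).card = k) →
    ∃ c : V → ℕ, (∀ v, c v ∈ L v) ∧
      ∀ v, (({w | G.Adj v w ∧ c w = c v}.ncard : ℤ)) ≤ d

/-- `G` is `(k,d)`-colourable: the vertices can be `k`-coloured with every vertex having at most
`d` neighbours of its own colour. -/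
def DefColorable (G : SimpleGraph V) (k d : ℕ) : Prop :=
  ∃ c : V → Fin k, ∀ v, {w | G.Adj v w ∧ c w = c v}.ncard ≤ d

/-- `H` is a minor of `G`, via pairwise disjoint connected branch sets. -/
def IsMinor (H : SimpleGraph α) (G : SimpleGraph V) : Prop :=
  ∃ B : α → Set V,
    (∀ a, (B a).Nonempty) ∧
    (∀ a, (G.induce (B a)).Connected) ∧
    (Pairwise fun a b => Disjoint (B a) (B b)) ∧
    (∀ a b, H.Adj a b → ∃ x ∈ B a, ∃ y ∈ B b, G.Adj x y)

/-- A subdivision of `H` whose path lengths all satisfy `lenOK` occurs as a subgraph of `G`: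
the branch vertices are embedded injectively by `f`, each edge of `H` is replaced by a path of
`G` between the corresponding branch vertices, internal vertices of these paths avoid branch
vertices, and distinct paths meet only in common endpoints. -/
def HasSubdivWith (G : SimpleGraph V) (H : SimpleGraph α) (lenOK : ℕ → Prop) : Prop :=
  ∃ f : α → V, Function.Injective f ∧
    ∃ P : ∀ ⦃a b : α⦄, H.Adj a b → G.Walk (f a) (f b),
      (∀ ⦃a b⦄ (h : H.Adj a b), (P h).IsPath ∧ lenOK (P h).length) ∧
      (∀ ⦃a b⦄ (h : H.Adj a b) (c : α), f c ∈ (P h).support → c = a ∨ c = b) ∧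
      (∀ ⦃a b⦄ (h : H.Adj a b) ⦃a' b'⦄ (h' : H.Adj a' b'), s(a, b) ≠ s(a', b') →
        ∀ x ∈ (P h).support, x ∈ (P h').support →
          (x = f a ∨ x = f b) ∧ (x = f a' ∨ x = f b'))

/-- Some `(≤ k)`-subdivision of `H` (each edge replaced by a path of length at most `k+1`)
is a subgraph of `G`. -/
def HasSubdivLE (G : SimpleGraph V) (k : ℕ) (H : SimpleGraph α) : Prop :=
  HasSubdivWith G H fun L => L ≤ k + 1

/-- `H` is a topological minor of `G`: some subdivision of `H` is a subgraph of `G`. -/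
def HasTopMinor (G : SimpleGraph V) (H : SimpleGraph α) : Prop :=
  HasSubdivWith G H fun _ => True

/-- The exact `1`-subdivision of `H`: every edge is subdivided exactly once. -/
def exactOneSubdivision (H : SimpleGraph α) : SimpleGraph (α ⊕ H.edgeSet) :=
  SimpleGraph.fromRel fun x y =>
    match x, y with
    | Sum.inl a, Sum.inr e => a ∈ (e : Sym2 α)
    | _, _ => False

/-- The graph `K*_{s,t}`: `K_{s,t}` together with `binom s 2` new vertices, each adjacent to a
distinct pair of vertices on the side of size `s`. -/
def KstarGraph (s t : ℕ) :
    SimpleGraph (Fin s ⊕ (Fin t ⊕ {p : Fin s × Fin s // p.1 < p.2})) :=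
  SimpleGraph.fromRel fun x y =>
    match x, y with
    | Sum.inl _, Sum.inr (Sum.inl _) => True
    | Sum.inl a, Sum.inr (Sum.inr c) => a = c.1.1 ∨ a = c.1.2
    | _, _ => False

/-- The auxiliary function `N₁(s,t,δ,δ₁)`. -/
noncomputable def N1 (s t : ℕ) (δ δ₁ : ℝ) : ℝ :=
  if s = 1 then (t : ℝ) - 1
  else if s = 2 then (δ - 2) * δ₁ * t / 2 + δ
  else (δ - s) * ((Nat.choose ⌊δ₁⌋₊ (s - 1) : ℝ) * ((t : ℝ) - 1) + δ₁ / 2) + δ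

/-- The maximum average degree of `G`: maximum of `2|E(H)|/|V(H)|` over nonempty subgraphs. -/
noncomputable def mad [Fintype V] (G : SimpleGraph V) : ℝ :=
  sSup {q : ℝ | ∃ H : G.Subgraph, H.verts.Nonempty ∧
    q = 2 * (H.edgeSet.ncard : ℝ) / (H.verts.ncard : ℝ)}

/-- `∇₀(G)`: maximum of `|E(H)|/|V(H)|` over nonempty subgraphs of `G`. -/
noncomputable def nabla0 [Fintype V] (G : SimpleGraph V) : ℝ :=
  sSup {q : ℝ | ∃ H : G.Subgraph, H.verts.Nonempty ∧
    q = (H.edgeSet.ncard : ℝ) / (H.verts.ncard : ℝ)}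

/-- `∇₁(G)`: maximum of `|E(H)|/|V(H)|` over graphs `H` some `(≤2)`-subdivision of which is a
subgraph of `G`. -/
noncomputable def nabla1 [Fintype V] (G : SimpleGraph V) : ℝ :=
  sSup {q : ℝ | ∃ (n : ℕ) (H : SimpleGraph (Fin n)), 0 < n ∧
    HasSubdivLE G 2 H ∧ q = (H.edgeSet.ncard : ℝ) / (n : ℝ)}

end Defs

/-- The vertex type of the graph `G(s,N)` (here indexed by `t = s - 2`). -/
def GVert : ℕ → ℕ → Type
  | 0, N => Fin (N + 2)
  | t + 1, N => Option (Fin (N + 1) × GVert t N)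

/-- The graph `G(s,N)` (indexed by `t = s - 2`): `GGraph 0 N = G(2,N) = K_{1,N+1}`, and
`GGraph (t+1) N = G(t+3,N)` is obtained from `N+1` disjoint copies of `GGraph t N` by adding
a dominant vertex. -/
def GGraph : (t : ℕ) → (N : ℕ) → SimpleGraph (GVert t N)
  | 0, N => SimpleGraph.fromRel fun i j => i = (0 : Fin (N + 2))
  | t + 1, N => SimpleGraph.fromRel fun x y =>
      match x, y with
      | none, some _ => True
      | some (i, a), some (j, b) => i = j ∧ (GGraph t N).Adj a b
      | _, _ => False

section More

variable {V : Type u} {α : Type v}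

/-- `r` is a forest order witnessing that `H` is a subgraph of the closure of a rooted forest:
`r` is a partial order in which the set of ancestors of each vertex is a chain, and adjacent
vertices of `H` are comparable. -/
def IsForestOrder (H : SimpleGraph α) (r : α → α → Prop) : Prop :=
  IsPartialOrder α r ∧ (∀ v : α, IsChain r {u | r u v}) ∧
    (∀ x y, H.Adj x y → r x y ∨ r y x)

/-- The tree-depth of `H`: the minimum height of a rooted forest whose closure contains `H`
as a subgraph (the height being measured as the maximum number of vertices on a
root--to--leaf path). -/
noncomputable def treeDepth (H : SimpleGraph α) : ℕ :=
  sInf {k | ∃ r : α → α → Prop, IsForestOrder H r ∧ ∀ v, {u | r u v}.ncard ≤ k}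

/-- The vertex cover number `τ(H)`. -/
noncomputable def vertexCoverNumber (H : SimpleGraph α) : ℕ :=
  sInf {k | ∃ S : Set α, S.ncard = k ∧ ∀ ⦃x y⦄, H.Adj x y → x ∈ S ∨ y ∈ S}

/-- The graph obtained from `ℓ` disjoint copies of the star `K_{1,k}` by adding one dominant
vertex. -/
def Hlk (l k : ℕ) : SimpleGraph (Option (Fin l × Fin (k + 1))) :=
  SimpleGraph.fromRel fun x y =>
    match x, y with
    | none, some _ => True
    | some (i, a), some (j, _) => i = j ∧ a = 0
    | _, _ => False

/-- The star `K_{1,k}` together with `m` isolated vertices. -/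
def StarPlusIsolated (k m : ℕ) : SimpleGraph (Fin (k + 1) ⊕ Fin m) :=
  SimpleGraph.fromRel fun x y =>
    match x, y with
    | Sum.inl i, Sum.inl _ => i = 0
    | _, _ => False

/-- `G` admits a `k`-stack layout: a linear ordering of the vertices (given by an injection
into `ℕ`) and an assignment of the edges to `k` stacks so that no two edges in a common stack
cross. -/
def HasStackLayout (G : SimpleGraph V) (k : ℕ) : Prop :=
  ∃ f : V → ℕ, Function.Injective f ∧
    ∃ σ : Sym2 V → Fin k,
      ∀ a b c d : V, G.Adj a b → G.Adj c d → σ s(a, b) = σ s(c, d) →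
        ¬(f a < f c ∧ f c < f b ∧ f b < f d)

/-- `G` admits a `k`-queue layout: a linear ordering of the vertices (given by an injection
into `ℕ`) and an assignment of the edges to `k` queues so that no two edges in a common queue
are nested. -/
def HasQueueLayout (G : SimpleGraph V) (k : ℕ) : Prop :=
  ∃ f : V → ℕ, Function.Injective f ∧
    ∃ σ : Sym2 V → Fin k,
      ∀ a b c d : V, G.Adj a b → G.Adj c d → σ s(a, b) = σ s(c, d) →
        ¬(f a < f c ∧ f c < f d ∧ f d < f b)

end More

/-- Recolouring `v` with a colour absent from its neighbourhood. If the colouring `c` has defect at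
most `d` on a subgraph `H'` containing every edge of `H` that avoids `v`, and fewer than `|L v|`
colours occur around `v`, then `H` has a colouring from the lists with defect at most `d`. -/
lemma exists_recolouring {V : Type*} [Finite V] {G : SimpleGraph V} {H H' : G.Subgraph} {d : ℕ}
    {L : V → Finset ℕ} {c : V → ℕ} {v : V}
    (hc : ∀ w, c w ∈ L w)
    (hd : ∀ w, {z | H'.Adj w z ∧ c z = c w}.ncard ≤ d)
    (hH : ∀ w z, H.Adj w z → w ≠ v → z ≠ v → H'.Adj w z)
    (hfree : (c '' {z | H.Adj v z}).ncard < (L v).card) :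
    ∃ c' : V → ℕ, (∀ w, c' w ∈ L w) ∧ ∀ w, {z | H.Adj w z ∧ c' z = c' w}.ncard ≤ d := by
  classical
  obtain ⟨x, hxL, hx⟩ : ∃ x ∈ (L v : Set ℕ), x ∉ c '' {z | H.Adj v z} :=
    Set.exists_mem_notMem_of_ncard_lt_ncard (by simpa using hfree)
  have hx' : ∀ z, H.Adj v z → c z ≠ x := fun z hz hzx => hx ⟨z, hz, hzx⟩
  refine ⟨Function.update c v x, fun w => ?_, fun w => ?_⟩
  · by_cases hw : w = v
    · subst hw; simpa using hxL
    · simpa [hw] using hc w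
  · by_cases hw : w = v
    · subst hw
      have : {z | H.Adj w z ∧ Function.update c w x z = Function.update c w x w} = ∅ := by
        ext z
        simp only [Set.mem_ofPred_eq, Set.mem_empty_iff_false, iff_false, not_and]
        intro hz
        rw [Function.update_of_ne (H.adj_sub hz).ne', Function.update_self]
        exact hx' z hz
      rw [this, Set.ncard_empty]
      exact Nat.zero_le d
    · refine (Set.ncard_le_ncard ?_).trans (hd w)
      rintro z ⟨hz, hcz⟩
      rw [Function.update_of_ne hw] at hcz
      have hzv : z ≠ v := by
        rintro rfl
        rw [Function.update_self] at hcz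
        exact hx' w hz.symm hcz.symm
      rw [Function.update_of_ne hzv] at hcz
      exact ⟨hH w z hz hw hzv, hcz⟩

/-- A vertex of degree at most `l` with more than `l - k` neighbours of its own colour sees at most
`k` colours. -/
lemma ncard_image_neighbors_le {V : Type*} [Finite V] {G : SimpleGraph V} {H : G.Subgraph}
    {k l : ℕ} {c : V → ℕ} {v : V}
    (hdeg : {z | H.Adj v z}.ncard ≤ l)
    (hbad : l - k < {z | H.Adj v z ∧ c z = c v}.ncard) :
    (c '' {z | H.Adj v z}).ncard ≤ k := by
  have hsum : {z | H.Adj v z ∧ c z = c v}.ncard + {z | H.Adj v z ∧ c z ≠ c v}.ncard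
      = {z | H.Adj v z}.ncard := by
    rw [← Set.ncard_union_eq]
    · congr 1
      ext z
      simp only [Set.mem_union, Set.mem_ofPred_eq]
      tauto
    · exact Set.disjoint_left.2 fun z hz hz' => hz'.2 hz.2
  have hsub : c '' {z | H.Adj v z} ⊆ insert (c v) (c '' {z | H.Adj v z ∧ c z ≠ c v}) := by
    rintro _ ⟨z, hz, rfl⟩
    by_cases hzv : c z = c v
    · exact Or.inl hzv
    · exact Or.inr ⟨z, ⟨hz, hzv⟩, rfl⟩
  have h1 := Set.ncard_le_ncard hsub (Set.toFinite _)
  have h2 := Set.ncard_insert_le (c v) (c '' {z | H.Adj v z ∧ c z ≠ c v})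
  have h3 := Set.ncard_image_le (f := c) (Set.toFinite {z | H.Adj v z ∧ c z ≠ c v})
  omega

/-- For integers `ℓ ≥ k ≥ 1`, if every (nonempty) subgraph `H` of a finite simple graph `G`
has a vertex of degree at most `k` or an `ℓ`-light edge, then `G` is `(k+1, ℓ-k)`-choosable. -/
theorem stmt0 {V : Type} [Fintype V] (G : SimpleGraph V) (k l : ℕ)
    (hk : 1 ≤ k) (hkl : k ≤ l)
    (h : ∀ H : G.Subgraph, H.verts.Nonempty →
      (∃ v ∈ H.verts, {w | H.Adj v w}.ncard ≤ k) ∨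
      (∃ u v, H.Adj u v ∧ {w | H.Adj u w}.ncard ≤ l ∧ {w | H.Adj v w}.ncard ≤ l)) :
    Choosable G (k + 1) ((l : ℤ) - (k : ℤ)) := by
  intro L hL
  suffices main : ∀ H : G.Subgraph, ∃ c : V → ℕ, (∀ v, c v ∈ L v) ∧
      ∀ v, {w | H.Adj v w ∧ c w = c v}.ncard ≤ l - k by
    obtain ⟨c, hc, hd⟩ := main ⊤
    refine ⟨c, hc, fun v => ?_⟩
    have := hd v
    simp only [Subgraph.top_adj] at this
    omega
  intro H
  induction H using WellFoundedLT.induction with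
  | ind H ih =>
  rcases Set.eq_empty_or_nonempty H.verts with hemp | hne
  · have hL' : ∀ v, ∃ x, x ∈ L v := fun v =>
      Finset.card_pos.1 (by rw [hL v]; omega)
    choose c hc using hL'
    refine ⟨c, hc, fun v => ?_⟩
    have : {w | H.Adj v w ∧ c w = c v} = ∅ := by
      ext w
      simp only [Set.mem_ofPred_eq, Set.mem_empty_iff_false, iff_false, not_and]
      intro hw
      have := hw.fst_mem
      simp [hemp] at this
    simp [this]
  rcases h H hne with ⟨v, hv, hdeg⟩ | ⟨u, v, huv, hu, hv⟩
  · have hlt : H.deleteVerts {v} < H := by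
      refine lt_of_le_of_ne Subgraph.deleteVerts_le fun heq => ?_
      have hv' := hv
      rw [← heq] at hv'
      simp at hv'
    obtain ⟨c, hc, hd⟩ := ih _ hlt
    refine exists_recolouring (v := v) hc hd (fun w z hwz hw hz => ?_) ?_
    · rw [Subgraph.deleteVerts_adj]
      exact ⟨hwz.fst_mem, hw, hwz.snd_mem, hz, hwz⟩
    · rw [hL v]
      exact Nat.lt_succ_of_le ((Set.ncard_image_le (Set.toFinite _)).trans hdeg)
  · have hlt : H.deleteEdges {s(u, v)} < H := by
      refine lt_of_le_of_ne (Subgraph.deleteEdges_le _) fun heq => ?_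
      have huv' := huv
      rw [← heq] at huv'
      simp at huv'
    obtain ⟨c, hc, hd⟩ := ih _ hlt
    by_cases hgood : ∀ w, {z | H.Adj w z ∧ c z = c w}.ncard ≤ l - k
    · exact ⟨c, hc, hgood⟩
    push Not at hgood
    obtain ⟨w, hbad⟩ := hgood
    -- Deleting `uv` changes neighbourhoods only at `u` and `v`, so the excess is at one of them.
    have hw : w = u ∨ w = v := by
      by_contra hcon
      push Not at hcon
      refine absurd (hd w) (not_le.2 (hbad.trans_le (Set.ncard_le_ncard ?_)))
      rintro z ⟨hz, hcz⟩
      refine ⟨?_, hcz⟩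
      rw [Subgraph.deleteEdges_adj]
      exact ⟨hz, by simp [hcon.1, hcon.2]⟩
    have hdegw : {z | H.Adj w z}.ncard ≤ l := by
      rcases hw with rfl | rfl <;> assumption
    refine exists_recolouring (v := w) hc hd (fun a b hab ha hb => ?_) ?_
    · rw [Subgraph.deleteEdges_adj]
      refine ⟨hab, ?_⟩
      rcases hw with rfl | rfl <;> simp [ha, hb]
    · rw [hL w]
      exact Nat.lt_succ_of_le (ncard_image_neighbors_le hdegw hbad)
end

section
/- Let s, t be positive integers and δ, δ₁ positive reals, and let ℓ = ⌊N₁(s,t,δ,δ₁)⌋. If G is a finite simple graph with at least one vertex such that every subgraph of G has average degree at most δ, and every graph whose exact 1-subdivision is a subgraph of G has average degree at most δ₁, then at least one of the following holds: (i) G contains K*_{s,t} as a subgraph; (ii) G has a vertex of degree at most s−1; (iii) G has an ℓ-light edge. -/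
/-!
The case `s = 1` is immediate: if no vertex has `t` neighbours, every edge is `(t - 1)`-light.

Let `s ≥ 2`, and suppose that all degrees are at least `s` and no edge is `ℓ`-light. Let `A` be the
set of vertices of degree at most `ℓ` and `B` its complement, which is nonempty. Then `A` is
independent, and comparing the degree sum of `G` with the bound on its average degree gives
`|A| > C |B|`, where `N₁ = (δ - s) C + δ` (`large_low_part`).

Let `H` be a graph on `B` with as many edges as possible such that the edges of `H` can be assigned
distinct vertices of `A`, each adjacent in `G` to both ends of its edge (`SubdivSystem`). The exact
1-subdivision of every induced subgraph of `H` is a subgraph of `G`, so all of these have average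
degree at most `δ₁`. By maximality, the neighbourhood of each unassigned vertex of `A` is a clique
of `H` (`SubdivSystem.exists_maximal`). At most `δ₁ |B| / 2` vertices of `A` are assigned. The
number of `s`-cliques of `H` is at most `δ₁ |B| / 2` if `s = 2`, and at most
`binom ⌊δ₁⌋ (s - 1) * |B|` in general because `H` is `⌊δ₁⌋`-degenerate
(`card_cliques_le_of_degenerate`). In either case the pigeonhole principle gives `t` unassigned
vertices adjacent to all vertices of one `s`-clique of `H`. Together with the vertices assigned to
the edges of that clique, they form a `K*_{s,t}`.
-/

open SimpleGraph

universe u v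

/-! ### Cliques in degenerate graphs -/

open scoped Classical in
/-- If every nonempty subset of `B` has a vertex with at most `d` neighbours in it, then `H` has at
most `|B| * binom d k` cliques of size `k + 1` inside `B`: each of them is counted at the vertex
that is removed first. -/
theorem card_cliques_le_of_degenerate {V : Type*} (H : SimpleGraph V) (d k : ℕ) (B : Finset V)
    (hdeg : ∀ B' ⊆ B, B'.Nonempty → ∃ v ∈ B', (B'.filter (H.Adj v)).card ≤ d) :
    ((B.powersetCard (k + 1)).filter (fun S : Finset V => H.IsClique (S : Set V))).card
      ≤ B.card * d.choose k := by
  induction B using Finset.strongInduction with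
  | H B ih =>
  rcases B.eq_empty_or_nonempty with rfl | hne
  · simp
  obtain ⟨v, hv, hvd⟩ := hdeg B subset_rfl hne
  have ih' := ih (B.erase v) (Finset.erase_ssubset hv)
    (fun B' hB' => hdeg B' (hB'.trans (Finset.erase_subset _ _)))
  set K := (B.powersetCard (k + 1)).filter (fun S : Finset V => H.IsClique (S : Set V)) with hK
  have hsplit := Finset.card_filter_add_card_filter_not (s := K) (fun S => v ∈ S)
  have h1 : (K.filter (fun S => v ∈ S)).card ≤ d.choose k := by
    calc (K.filter (fun S => v ∈ S)).card
        ≤ ((B.filter (H.Adj v)).powersetCard k).card := by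
          refine Finset.card_le_card_of_injOn (fun S => S.erase v) ?_ ?_
          · intro S hS
            simp only [hK, Finset.coe_filter, Finset.mem_filter, Finset.mem_powersetCard,
              Set.mem_ofPred_eq] at hS
            obtain ⟨⟨⟨hSB, hSc⟩, hcl⟩, hvS⟩ := hS
            simp only [Finset.mem_coe, Finset.mem_powersetCard]
            refine ⟨fun x hx => ?_, by rw [Finset.card_erase_of_mem hvS, hSc]; rfl⟩
            have hx' := Finset.mem_erase.1 hx
            exact Finset.mem_filter.2 ⟨hSB hx'.2, hcl (by simpa using hvS) (by simpa using hx'.2)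
              (Ne.symm hx'.1)⟩
          · intro S hS T hT hST
            simp only [Finset.coe_filter, Set.mem_ofPred_eq] at hS hT
            rw [← Finset.insert_erase hS.2, ← Finset.insert_erase hT.2]
            exact congrArg _ hST
      _ = (B.filter (H.Adj v)).card.choose k := Finset.card_powersetCard _ _
      _ ≤ d.choose k := Nat.choose_le_choose _ hvd
  have h2 : (K.filter (fun S => ¬ v ∈ S)).card ≤ (B.erase v).card * d.choose k := by
    refine le_trans (Finset.card_le_card ?_) ih'
    intro S hS
    simp only [hK, Finset.mem_filter, Finset.mem_powersetCard] at hS ⊢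
    exact ⟨⟨Finset.subset_erase.2 ⟨hS.1.1.1, hS.2⟩, hS.1.1.2⟩, hS.1.2⟩
  have h3 : B.card = (B.erase v).card + 1 := (Finset.card_erase_add_one hv).symm
  rw [h3, add_mul, one_mul]
  omega

/-! ### Graphs on the high-degree vertices subdivided by low-degree vertices -/

/-- A set `F` of edges on the complement of `A`, with an assignment `φ` of distinct vertices of `A`
to them such that `φ e` is adjacent in `G` to both ends of `e`. The values of `φ` outside `F` are
irrelevant. -/
structure SubdivSystem {V : Type*} (G : SimpleGraph V) (A : Finset V) (F : Finset (Sym2 V))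
    (φ : Sym2 V → V) : Prop where
  not_diag : ∀ e ∈ F, ¬ e.IsDiag
  avoids : ∀ e ∈ F, ∀ x ∈ e, x ∉ A
  mem : ∀ e ∈ F, φ e ∈ A
  adj : ∀ e ∈ F, ∀ x ∈ e, G.Adj x (φ e)
  inj : Set.InjOn φ (F : Set (Sym2 V))

namespace SubdivSystem

variable {V : Type*} {G : SimpleGraph V} {A : Finset V} {F : Finset (Sym2 V)} {φ : Sym2 V → V}

/-- In a system with the most edges, any two neighbours of an unassigned vertex of `A` are joined:
otherwise that vertex could be assigned to a new edge. -/
theorem exists_maximal [Fintype V] [DecidableEq V] [Nonempty V] (G : SimpleGraph V) (A : Finset V)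
    (hA : ∀ u ∈ A, ∀ v ∈ A, ¬ G.Adj u v) :
    ∃ F φ, SubdivSystem G A F φ ∧ ∀ v ∈ A, v ∉ F.image φ →
      ∀ x y, G.Adj v x → G.Adj v y → x ≠ y → s(x, y) ∈ F := by
  classical
  obtain ⟨v₀⟩ := ‹Nonempty V›
  let P : Finset (Sym2 V) → Prop := fun F => ∃ φ, SubdivSystem G A F φ
  have hne : (Finset.univ.filter P).Nonempty :=
    ⟨∅, by simpa [P] using ⟨fun _ => v₀, by simp, by simp, by simp, by simp, by simp⟩⟩
  obtain ⟨F, hF, hmax⟩ := Finset.exists_max_image _ Finset.card hne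
  obtain ⟨φ, h⟩ := (Finset.mem_filter.1 hF).2
  refine ⟨F, φ, h, fun v hv hvF x y hx hy hxy => ?_⟩
  by_contra hnot
  have hold : ∀ e ∈ F, Function.update φ s(x, y) v e = φ e := fun e he =>
    Function.update_of_ne (by rintro rfl; exact hnot he) _ _
  have hnew : Function.update φ s(x, y) v s(x, y) = v := Function.update_self _ _ _
  have hφv : ∀ e ∈ F, φ e ≠ v := fun e he hev => hvF (Finset.mem_image.2 ⟨e, he, hev⟩)
  have hsys : SubdivSystem G A (insert s(x, y) F) (Function.update φ s(x, y) v) := by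
    refine ⟨?_, ?_, ?_, ?_, ?_⟩
    · intro e he
      rcases Finset.mem_insert.1 he with rfl | he
      · simpa using hxy
      · exact h.not_diag e he
    · intro e he z hz
      rcases Finset.mem_insert.1 he with rfl | he
      · rcases Sym2.mem_iff.1 hz with rfl | rfl
        · exact fun hzA => hA v hv _ hzA hx
        · exact fun hzA => hA v hv _ hzA hy
      · exact h.avoids e he z hz
    · intro e he
      rcases Finset.mem_insert.1 he with rfl | he
      · rwa [hnew]
      · rw [hold e he]; exact h.mem e he
    · intro e he z hz
      rcases Finset.mem_insert.1 he with rfl | he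
      · rw [hnew]
        rcases Sym2.mem_iff.1 hz with rfl | rfl
        · exact hx.symm
        · exact hy.symm
      · rw [hold e he]; exact h.adj e he z hz
    · intro e he e' he' hee
      rcases Finset.mem_insert.1 he with rfl | he <;> rcases Finset.mem_insert.1 he' with rfl | he'
      · rfl
      · rw [hnew, hold e' he'] at hee; exact absurd hee.symm (hφv e' he')
      · rw [hnew, hold e he] at hee; exact absurd hee (hφv e he)
      · rw [hold e he, hold e' he'] at hee; exact h.inj he he' hee
  have := hmax (insert s(x, y) F) (Finset.mem_filter.2 ⟨Finset.mem_univ _, _, hsys⟩)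
  rw [Finset.card_insert_of_notMem hnot] at this
  omega

theorem containsSubgraph_exactOneSubdivision (h : SubdivSystem G A F φ) {n : ℕ} (f : Fin n → V)
    (hf : Function.Injective f) (hfA : ∀ i, f i ∉ A) :
    ContainsSubgraph G
      (exactOneSubdivision ((SimpleGraph.fromEdgeSet (F : Set (Sym2 V))).comap f)) := by
  have hmem : ∀ e : ((SimpleGraph.fromEdgeSet (F : Set (Sym2 V))).comap f).edgeSet,
      Sym2.map f e ∈ F := by
    rintro ⟨e, he⟩
    induction e using Sym2.ind with
    | _ x y =>
    simp only [SimpleGraph.mem_edgeSet, SimpleGraph.comap_adj, SimpleGraph.fromEdgeSet_adj] at he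
    simpa using he.1
  refine ⟨⟨Sum.elim f (fun e => φ (Sym2.map f e)), ?_⟩, ?_⟩
  · intro x y hxy
    rw [exactOneSubdivision, SimpleGraph.fromRel_adj] at hxy
    rcases x with a | e <;> rcases y with b | e'
    · simp at hxy
    · simp only [or_false] at hxy
      exact h.adj _ (hmem e') _ (Sym2.mem_map.2 ⟨a, hxy.2, rfl⟩)
    · simp only [false_or] at hxy
      exact (h.adj _ (hmem e) _ (Sym2.mem_map.2 ⟨b, hxy.2, rfl⟩)).symm
    · simp at hxy
  · rintro (a | e) (b | e') hxy
    · exact congrArg _ (hf hxy)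
    · exact absurd (show f a ∈ A from (show f a = φ _ from hxy) ▸ h.mem _ (hmem e')) (hfA a)
    · exact absurd (show f b ∈ A from (show φ _ = f b from hxy) ▸ h.mem _ (hmem e)) (hfA b)
    · exact congrArg _ (Subtype.ext (Sym2.map.injective hf (h.inj (hmem e) (hmem e') hxy)))

/-- An `s`-clique `S` of the system and a set `T` of `t` unassigned common neighbours of `S` form a
`K*_{s,t}`, in which the vertex attached to a pair of `S` is the one assigned to that edge. -/
theorem containsSubgraph_KstarGraph [DecidableEq V] (h : SubdivSystem G A F φ) {s t : ℕ}
    (S T : Finset V) (hS : S.card = s) (hT : T.card = t)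
    (hSA : ∀ x ∈ S, x ∉ A) (hclique : ∀ x ∈ S, ∀ y ∈ S, x ≠ y → s(x, y) ∈ F)
    (hTA : ∀ v ∈ T, v ∈ A ∧ v ∉ F.image φ) (hTS : ∀ v ∈ T, ∀ x ∈ S, G.Adj v x) :
    ContainsSubgraph G (KstarGraph s t) := by
  let g := (S.equivFinOfCardEq hS).symm
  let k := (T.equivFinOfCardEq hT).symm
  have hg : ∀ i, (g i : V) ∈ S := fun i => (g i).2
  have hk : ∀ i, (k i : V) ∈ T := fun i => (k i).2
  have hginj : Function.Injective (fun i => (g i : V)) :=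
    Subtype.val_injective.comp g.injective
  have hkinj : Function.Injective (fun i => (k i : V)) :=
    Subtype.val_injective.comp k.injective
  have hc : ∀ c : {p : Fin s × Fin s // p.1 < p.2}, s((g c.1.1 : V), (g c.1.2 : V)) ∈ F :=
    fun c => hclique _ (hg _) _ (hg _) (fun he => c.2.ne (hginj he))
  refine ⟨⟨Sum.elim (fun i => (g i : V)) (Sum.elim (fun j => (k j : V))
    (fun c => φ s((g c.1.1 : V), (g c.1.2 : V)))), ?_⟩, ?_⟩
  · intro x y hxy
    rw [KstarGraph, SimpleGraph.fromRel_adj] at hxy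
    have hadj : ∀ a (c : {p : Fin s × Fin s // p.1 < p.2}), a = c.1.1 ∨ a = c.1.2 →
        G.Adj (g a : V) (φ s((g c.1.1 : V), (g c.1.2 : V))) := by
      rintro a c (rfl | rfl)
      · exact h.adj _ (hc c) _ (Sym2.mem_mk_left _ _)
      · exact h.adj _ (hc c) _ (Sym2.mem_mk_right _ _)
    rcases x with a | j | c <;> rcases y with b | j' | c'
    · simp at hxy
    · exact (hTS _ (hk j') _ (hg a)).symm
    · simp only [or_false] at hxy
      exact hadj a c' hxy.2
    · exact hTS _ (hk j) _ (hg b)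
    · simp at hxy
    · simp at hxy
    · simp only [false_or] at hxy
      exact (hadj b c hxy.2).symm
    · simp at hxy
    · simp at hxy
  · have h1 : ∀ a j, (g a : V) ≠ k j := fun a j he => hSA _ (hg a) (he ▸ (hTA _ (hk j)).1)
    have h2 : ∀ a (c : {p : Fin s × Fin s // p.1 < p.2}),
        (g a : V) ≠ φ s((g c.1.1 : V), (g c.1.2 : V)) :=
      fun a c he => hSA _ (hg a) (he ▸ h.mem _ (hc c))
    have h3 : ∀ j (c : {p : Fin s × Fin s // p.1 < p.2}),
        (k j : V) ≠ φ s((g c.1.1 : V), (g c.1.2 : V)) :=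
      fun j c he => (hTA _ (hk j)).2 (he ▸ Finset.mem_image_of_mem _ (hc c))
    rintro (a | j | c) (b | j' | c') hxy
    · exact congrArg _ (hginj hxy)
    · exact absurd hxy (h1 _ _)
    · exact absurd hxy (h2 _ _)
    · exact absurd hxy.symm (h1 _ _)
    · exact congrArg _ (congrArg _ (hkinj hxy))
    · exact absurd hxy (h3 _ _)
    · exact absurd hxy.symm (h2 _ _)
    · exact absurd hxy.symm (h3 _ _)
    · have he := h.inj (hc c) (hc c') hxy
      refine congrArg _ (congrArg _ (Subtype.ext ?_))
      have hcc := c.2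
      have hcc' := c'.2
      rcases Sym2.eq_iff.1 he with ⟨h1, h2⟩ | ⟨h1, h2⟩
      · exact Prod.ext (hginj h1) (hginj h2)
      -- the swapped case contradicts the ordering of both pairs
      · have e1 : c.1.1 = c'.1.2 := hginj h1
        have e2 : c.1.2 = c'.1.1 := hginj h2
        rw [e1, e2] at hcc
        exact absurd hcc (not_lt.2 hcc'.le)

/-- The average degree bound on exact 1-subdivisions, applied to the whole graph of a system. -/
theorem two_mul_card_le [Fintype V] [DecidableEq V] (h : SubdivSystem G A F φ) {δ₁ : ℝ}
    (hsub : ∀ (n : ℕ) (H : SimpleGraph (Fin n)), 0 < n →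
      ContainsSubgraph G (exactOneSubdivision H) →
      2 * (H.edgeSet.ncard : ℝ) ≤ δ₁ * (n : ℝ)) (hB : Aᶜ.Nonempty) :
    2 * (F.card : ℝ) ≤ δ₁ * (Aᶜ.card : ℝ) := by
  classical
  let g := (Aᶜ).equivFin.symm
  let f : Fin (Aᶜ).card → V := fun i => (g i : V)
  have hf : Function.Injective f := Subtype.val_injective.comp g.injective
  have hfA : ∀ i, f i ∉ A := fun i => Finset.mem_compl.1 (g i).2
  have hsurj : ∀ x, x ∉ A → ∃ i, f i = x := fun x hx =>
    ⟨(Aᶜ).equivFin ⟨x, Finset.mem_compl.2 hx⟩, by simp [f, g]⟩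
  have key := hsub _ _ hB.card_pos (h.containsSubgraph_exactOneSubdivision f hf hfA)
  refine le_trans ?_ key
  have : F.card ≤ ((SimpleGraph.fromEdgeSet (F : Set (Sym2 V))).comap f).edgeSet.ncard := by
    rw [← Set.ncard_coe_finset F]
    refine le_trans (Set.ncard_le_ncard ?_ (Set.toFinite _))
      (Set.ncard_image_le (f := Sym2.map f) (Set.toFinite _))
    intro e he
    induction e using Sym2.ind with
    | _ x y =>
    obtain ⟨i, rfl⟩ := hsurj x (h.avoids _ he x (Sym2.mem_mk_left _ _))
    obtain ⟨j, rfl⟩ := hsurj y (h.avoids _ he _ (Sym2.mem_mk_right _ _))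
    refine ⟨s(i, j), ?_, by simp⟩
    have := h.not_diag _ he
    simp only [SimpleGraph.mem_edgeSet, SimpleGraph.comap_adj, SimpleGraph.fromEdgeSet_adj]
    exact ⟨he, by simpa using this⟩
  have : (F.card : ℝ) ≤ _ := Nat.cast_le.2 this
  linarith

open scoped Classical in
/-- The graph of a system is `⌊δ₁⌋`-degenerate: its induced subgraphs also have average degree at
most `δ₁`. -/
theorem exists_degree_le [Fintype V] (h : SubdivSystem G A F φ)
    {δ₁ : ℝ}
    (hsub : ∀ (n : ℕ) (H : SimpleGraph (Fin n)), 0 < n →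
      ContainsSubgraph G (exactOneSubdivision H) →
      2 * (H.edgeSet.ncard : ℝ) ≤ δ₁ * (n : ℝ)) (B : Finset V) (hBA : B ⊆ Aᶜ) (hB : B.Nonempty) :
    ∃ v ∈ B, (B.filter ((SimpleGraph.fromEdgeSet (F : Set (Sym2 V))).Adj v)).card ≤ ⌊δ₁⌋₊ := by
  classical
  let g := B.equivFin.symm
  let f : Fin B.card → V := fun i => (g i : V)
  have hf : Function.Injective f := Subtype.val_injective.comp g.injective
  have hfA : ∀ i, f i ∉ A := fun i => Finset.mem_compl.1 (hBA (g i).2)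
  have key := hsub _ _ hB.card_pos (h.containsSubgraph_exactOneSubdivision f hf hfA)
  set H := (SimpleGraph.fromEdgeSet (F : Set (Sym2 V))).comap f with hH
  have hsum := H.sum_degrees_eq_twice_card_edges
  rw [← Set.ncard_coe_finset H.edgeFinset, SimpleGraph.coe_edgeFinset] at hsum
  by_contra hcon
  push Not at hcon
  have hdeg : ∀ i, δ₁ < (H.degree i : ℝ) := by
    intro i
    refine Nat.lt_of_floor_lt (lt_of_lt_of_le (hcon (f i) (g i).2) ?_)
    rw [← SimpleGraph.card_neighborFinset_eq_degree]
    refine le_trans (Finset.card_le_card (fun x hx => ?_)) (Finset.card_image_le (f := f))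
    obtain ⟨hxB, hx⟩ := Finset.mem_filter.1 hx
    have hfx : f (B.equivFin ⟨x, hxB⟩) = x := by simp [f, g]
    refine Finset.mem_image.2 ⟨B.equivFin ⟨x, hxB⟩, ?_, hfx⟩
    rw [SimpleGraph.mem_neighborFinset, hH, SimpleGraph.comap_adj, hfx]
    exact hx
  have : δ₁ * (B.card : ℝ) < ∑ i, (H.degree i : ℝ) := by
    have hlt := Finset.sum_lt_sum_of_nonempty (s := (Finset.univ : Finset (Fin B.card)))
      ⟨⟨0, hB.card_pos⟩, Finset.mem_univ _⟩ (fun i _ => hdeg i)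
    simpa [mul_comm] using hlt
  have h2 : (∑ i, (H.degree i : ℝ)) = 2 * (H.edgeSet.ncard : ℝ) := by exact_mod_cast hsum
  linarith

end SubdivSystem

/-! ### Counting and pigeonhole -/

/-- If the vertices outside `A` have degree above `(δ - s) * C + δ`, all degrees are at least `s`,
and the average degree is at most `δ`, then `A` is more than `C` times as large as its complement. -/
theorem large_low_part {V : Type*} [Fintype V] [DecidableEq V] (d : V → ℕ) (A : Finset V) (s : ℕ)
    (δ C : ℝ) (hmin : ∀ v, s ≤ d v) (hsum : (∑ v, (d v : ℝ)) ≤ δ * (Fintype.card V : ℝ))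
    (hlarge : ∀ v, v ∉ A → (δ - s) * C + δ < (d v : ℝ)) (hB : Aᶜ.Nonempty) :
    C * (Aᶜ.card : ℝ) < (A.card : ℝ) := by
  have hcard : (Fintype.card V : ℝ) = A.card + Aᶜ.card := by
    exact_mod_cast (Finset.card_add_card_compl A).symm
  have hB0 : (0 : ℝ) < Aᶜ.card := by exact_mod_cast hB.card_pos
  have hA0 : (0 : ℝ) ≤ A.card := Nat.cast_nonneg _
  have hA : (s : ℝ) * A.card ≤ ∑ v ∈ A, (d v : ℝ) := by
    have := Finset.card_nsmul_le_sum A (fun v => (d v : ℝ)) s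
      (fun v _ => by exact_mod_cast hmin v)
    rwa [nsmul_eq_mul, mul_comm] at this
  have hBs : (s : ℝ) * Aᶜ.card ≤ ∑ v ∈ Aᶜ, (d v : ℝ) := by
    have := Finset.card_nsmul_le_sum Aᶜ (fun v => (d v : ℝ)) s
      (fun v _ => by exact_mod_cast hmin v)
    rwa [nsmul_eq_mul, mul_comm] at this
  have hBl : ((δ - s) * C + δ) * Aᶜ.card < ∑ v ∈ Aᶜ, (d v : ℝ) := by
    have := Finset.sum_lt_sum_of_nonempty hB (fun v hv => hlarge v (Finset.mem_compl.1 hv))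
    rwa [Finset.sum_const, nsmul_eq_mul, mul_comm] at this
  have hsplit := Finset.sum_add_sum_compl A (fun v => (d v : ℝ))
  rw [hcard] at hsum
  have hδs : 0 ≤ δ - s := by
    by_contra hneg
    push Not at hneg
    nlinarith
  have : (δ - s) * (C * Aᶜ.card) < (δ - s) * A.card := by nlinarith
  exact lt_of_mul_lt_mul_left this hδs

/-- The case `s ≥ 2`. The constant `C` only has to exceed, per vertex of high degree, the number of
assigned vertices of low degree plus `t - 1` vertices for each `s`-clique of the auxiliary graph. -/
theorem containsSubgraph_KstarGraph_of_no_light_edge {V : Type} [Fintype V] [Nonempty V]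
    (G : SimpleGraph V) (s t : ℕ) (hs : 2 ≤ s) (ht : 1 ≤ t) (δ δ₁ C : ℝ)
    (hC : s = 2 ∧ C = δ₁ * t / 2 ∨ C = (Nat.choose ⌊δ₁⌋₊ (s - 1) : ℝ) * ((t : ℝ) - 1) + δ₁ / 2)
    (hmad : ∀ H : G.Subgraph, H.verts.Nonempty →
      2 * (H.edgeSet.ncard : ℝ) ≤ δ * (H.verts.ncard : ℝ))
    (hsub : ∀ (n : ℕ) (H : SimpleGraph (Fin n)), 0 < n →
      ContainsSubgraph G (exactOneSubdivision H) →
      2 * (H.edgeSet.ncard : ℝ) ≤ δ₁ * (n : ℝ))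
    (hmin : ∀ v : V, s ≤ {w | G.Adj v w}.ncard)
    (hlight : ∀ u v : V, G.Adj u v → ({w | G.Adj u w}.ncard : ℤ) ≤ ⌊(δ - s) * C + δ⌋ →
      ¬ ({w | G.Adj v w}.ncard : ℤ) ≤ ⌊(δ - s) * C + δ⌋) :
    ContainsSubgraph G (KstarGraph s t) := by
  classical
  have hdeg : ∀ v, {w | G.Adj v w}.ncard = G.degree v := fun v => by
    rw [← SimpleGraph.card_neighborFinset_eq_degree, ← Set.ncard_coe_finset,
      SimpleGraph.coe_neighborFinset]
    rfl
  simp only [hdeg] at hmin hlight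
  set A : Finset V := Finset.univ.filter (fun v => (G.degree v : ℤ) ≤ ⌊(δ - s) * C + δ⌋) with hAdef
  have hmemA : ∀ v, v ∈ A ↔ (G.degree v : ℤ) ≤ ⌊(δ - s) * C + δ⌋ := fun v => by simp [hAdef]
  have hAind : ∀ u ∈ A, ∀ v ∈ A, ¬ G.Adj u v := fun u hu v hv huv =>
    hlight u v huv ((hmemA u).1 hu) ((hmemA v).1 hv)
  have hB : Aᶜ.Nonempty := by
    obtain ⟨v⟩ := ‹Nonempty V›
    by_cases hv : v ∈ A
    · obtain ⟨w, hw⟩ := (G.degree_pos_iff_exists_adj v).1 (by have := hmin v; omega)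
      exact ⟨w, Finset.mem_compl.2 fun hwA => hAind v hv w hwA hw⟩
    · exact ⟨v, Finset.mem_compl.2 hv⟩
  have hsum : (∑ v, (G.degree v : ℝ)) ≤ δ * (Fintype.card V : ℝ) := by
    have h1 := hmad ⊤ Set.univ_nonempty
    have h2 : (∑ v, (G.degree v : ℝ)) = 2 * (G.edgeFinset.card : ℝ) := by
      exact_mod_cast G.sum_degrees_eq_twice_card_edges
    rw [← Set.ncard_coe_finset, SimpleGraph.coe_edgeFinset] at h2
    rw [h2]
    simpa [Set.ncard_univ, Nat.card_eq_fintype_card] using h1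
  have hAB : C * (Aᶜ.card : ℝ) < (A.card : ℝ) := by
    refine large_low_part (fun v => G.degree v) A s δ C hmin hsum (fun v hv => ?_) hB
    rw [hmemA, not_le, Int.floor_lt] at hv
    exact_mod_cast hv
  obtain ⟨F, φ, hsys, hmax⟩ := SubdivSystem.exists_maximal G A hAind
  have hF := hsys.two_mul_card_le hsub hB
  -- the `s`-cliques of the auxiliary graph
  set H := SimpleGraph.fromEdgeSet (F : Set (Sym2 V)) with hHdef
  set K := (Aᶜ.powersetCard s).filter (fun S : Finset V => H.IsClique (S : Set V)) with hKdef
  have ht' : (0 : ℝ) ≤ (t : ℝ) - 1 := by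
    have : (1 : ℝ) ≤ t := by exact_mod_cast ht
    linarith
  have hcount : (K.card : ℝ) * ((t : ℝ) - 1) + F.card < A.card := by
    rcases hC with ⟨rfl, rfl⟩ | rfl
    · have hKF : K.card ≤ F.card := by
        refine le_trans (Finset.card_le_card ?_) (Finset.card_image_le (f := Sym2.toFinset))
        intro S hS
        simp only [hKdef, Finset.mem_filter, Finset.mem_powersetCard] at hS
        obtain ⟨x, y, hxy, rfl⟩ := Finset.card_eq_two.1 hS.1.2
        have hadj := hS.2 (by simp) (by simp) hxy
        rw [hHdef, SimpleGraph.fromEdgeSet_adj] at hadj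
        exact Finset.mem_image.2 ⟨s(x, y), hadj.1, by simp [Sym2.toFinset_mk_eq]⟩
      have hKF' : (K.card : ℝ) ≤ F.card := by exact_mod_cast hKF
      nlinarith
    · obtain ⟨k, rfl⟩ : ∃ k, s = k + 1 := ⟨s - 1, by omega⟩
      have hK := card_cliques_le_of_degenerate H ⌊δ₁⌋₊ k Aᶜ
        (fun B hBA hBne => by convert hsys.exists_degree_le hsub B hBA hBne)
      have hK' : (K.card : ℝ) ≤ (Aᶜ.card : ℝ) * (Nat.choose ⌊δ₁⌋₊ k : ℝ) := by
        have hK₀ : K.card ≤ Aᶜ.card * Nat.choose ⌊δ₁⌋₊ k := by convert hK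
        exact_mod_cast hK₀
      have := mul_le_mul_of_nonneg_right hK' ht'
      rw [Nat.add_sub_cancel] at hAB
      nlinarith
  -- the unassigned vertices of `A`, each with an `s`-set of neighbours
  set R := A \ F.image φ with hRdef
  have hRcard : K.card * (t - 1) < R.card := by
    have h1 : A.card ≤ R.card + F.card := by
      have h2 : A.card - (F.image φ).card ≤ R.card := Finset.le_card_sdiff (F.image φ) A
      have h3 : (F.image φ).card ≤ F.card := Finset.card_image_le
      omega
    have h1' : (A.card : ℝ) ≤ R.card + F.card := by exact_mod_cast h1
    have : ((K.card * (t - 1) : ℕ) : ℝ) < (R.card : ℝ) := by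
      push_cast [Nat.cast_sub ht]
      linarith
    exact_mod_cast this
  have hchoose : ∀ v, ∃ S ⊆ G.neighborFinset v, S.card = s := fun v =>
    Finset.exists_subset_card_eq (by simpa using hmin v)
  choose N hNsub hNcard using hchoose
  have hNadj : ∀ v, ∀ x ∈ N v, G.Adj v x := fun v x hx => by simpa using hNsub v hx
  have hNK : ∀ v ∈ R, N v ∈ K := by
    intro v hv
    obtain ⟨hvA, hvF⟩ := Finset.mem_sdiff.1 hv
    simp only [hKdef, Finset.mem_filter, Finset.mem_powersetCard]
    refine ⟨⟨fun x hx => Finset.mem_compl.2 fun hxA => hAind v hvA x hxA (hNadj v x hx), hNcard v⟩,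
      fun x hx y hy hxy => ?_⟩
    rw [hHdef, SimpleGraph.fromEdgeSet_adj]
    exact ⟨hmax v hvA hvF x y (hNadj v x hx) (hNadj v y hy) hxy, hxy⟩
  obtain ⟨S, hSK, hS⟩ := Finset.exists_lt_card_fiber_of_mul_lt_card_of_maps_to hNK hRcard
  obtain ⟨T, hTsub, hTcard⟩ := Finset.exists_subset_card_eq
    (show t ≤ (R.filter (fun v => N v = S)).card by omega)
  simp only [hKdef, Finset.mem_filter, Finset.mem_powersetCard] at hSK
  refine hsys.containsSubgraph_KstarGraph S T hSK.1.2 hTcard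
    (fun x hx => Finset.mem_compl.1 (hSK.1.1 hx)) (fun x hx y hy hxy => ?_)
    (fun v hv => Finset.mem_sdiff.1 (Finset.mem_filter.1 (hTsub hv)).1) (fun v hv x hx => ?_)
  · have hadj := hSK.2 hx hy hxy
    rw [hHdef, SimpleGraph.fromEdgeSet_adj] at hadj
    exact hadj.1
  · exact hNadj v x ((Finset.mem_filter.1 (hTsub hv)).2 ▸ hx)

/-- Lemma 3 of the paper: if every subgraph of `G` has average degree at most `δ` and every
graph whose exact 1-subdivision is a subgraph of `G` has average degree at most `δ₁`, then
`G` contains `K*_{s,t}`, or has a vertex of degree at most `s-1`, or has an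
`⌊N₁(s,t,δ,δ₁)⌋`-light edge. -/
theorem stmt1 {V : Type} [Fintype V] [Nonempty V] (G : SimpleGraph V)
    (s t : ℕ) (hs : 1 ≤ s) (ht : 1 ≤ t) (δ δ₁ : ℝ) (hδ : 0 < δ) (hδ₁ : 0 < δ₁)
    (hmad : ∀ H : G.Subgraph, H.verts.Nonempty →
      2 * (H.edgeSet.ncard : ℝ) ≤ δ * (H.verts.ncard : ℝ))
    (hsub : ∀ (n : ℕ) (H : SimpleGraph (Fin n)), 0 < n →
      ContainsSubgraph G (exactOneSubdivision H) →
      2 * (H.edgeSet.ncard : ℝ) ≤ δ₁ * (n : ℝ)) :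
    ContainsSubgraph G (KstarGraph s t) ∨
    (∃ v : V, {w | G.Adj v w}.ncard ≤ s - 1) ∨
    (∃ u v : V, G.Adj u v ∧ ({w | G.Adj u w}.ncard : ℤ) ≤ ⌊N1 s t δ δ₁⌋ ∧
      ({w | G.Adj v w}.ncard : ℤ) ≤ ⌊N1 s t δ δ₁⌋) := by
  classical
  by_contra hcon
  push Not at hcon
  obtain ⟨hK, hmin, hlight⟩ := hcon
  have hmin' : ∀ v : V, s ≤ {w | G.Adj v w}.ncard := fun v => by have := hmin v; omega
  rcases Nat.lt_or_ge s 2 with h2 | h2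
  · obtain rfl : s = 1 := by omega
    have hN : ⌊N1 1 t δ δ₁⌋ = (t : ℤ) - 1 := by
      rw [N1, if_pos rfl]
      exact_mod_cast Int.floor_intCast ((t : ℤ) - 1)
    -- a vertex with `t` neighbours is the centre of a `K*_{1,t}`, without subdivision vertices
    have hle : ∀ v : V, ({w | G.Adj v w}.ncard : ℤ) ≤ ⌊N1 1 t δ δ₁⌋ := by
      intro v
      by_contra hv
      rw [hN] at hv
      refine hK ?_
      obtain ⟨T, hT, hTc⟩ := Finset.exists_subset_card_eq
        (show t ≤ (Set.toFinite {w | G.Adj v w}).toFinset.card by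
          rw [← Set.ncard_eq_toFinset_card]; omega)
      refine SubdivSystem.containsSubgraph_KstarGraph (A := T) (F := ∅) (φ := fun _ => v)
        ⟨by simp, by simp, by simp, by simp, by simp⟩ {v} T (by simp) hTc ?_ ?_ ?_ ?_
      · intro x hx hxT
        rw [Finset.mem_singleton.1 hx] at hxT
        simpa using hT hxT
      · intro x hx y hy hxy
        exact absurd ((Finset.mem_singleton.1 hx).trans (Finset.mem_singleton.1 hy).symm) hxy
      · simp
      · intro w hw x hx
        rw [Finset.mem_singleton.1 hx]
        have : G.Adj v w := by simpa using hT hw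
        exact this.symm
    obtain ⟨v⟩ := ‹Nonempty V›
    obtain ⟨w, hw⟩ := Set.nonempty_of_ncard_ne_zero (s := {w | G.Adj v w})
      (by have := hmin' v; omega)
    exact absurd (hle w) (not_le.2 (hlight v w hw (hle v)))
  · obtain ⟨C, hC, hN⟩ : ∃ C : ℝ, (s = 2 ∧ C = δ₁ * t / 2 ∨
        C = (Nat.choose ⌊δ₁⌋₊ (s - 1) : ℝ) * ((t : ℝ) - 1) + δ₁ / 2) ∧
        N1 s t δ δ₁ = (δ - s) * C + δ := by
      rcases eq_or_ne s 2 with rfl | h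
      · refine ⟨_, Or.inl ⟨rfl, rfl⟩, ?_⟩
        rw [N1, if_neg (by omega), if_pos rfl]
        push_cast
        ring
      · exact ⟨_, Or.inr rfl, by rw [N1, if_neg (by omega), if_neg h]⟩
    rw [hN] at hlight
    exact hK (containsSubgraph_KstarGraph_of_no_light_edge G s t h2 ht δ δ₁ C hC hmad hsub hmin'
      (fun u v huv hu => not_le.2 (hlight u v huv hu)))
end

section
/- For integers s ≥ 2 and N ≥ 1, the graph G(s,N) has no K_{s,s} minor and is not (s−1, N)-colourable. -/
/-!
Both halves go by induction on `s`, using the dominant vertex of `G(s,N)`.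

*Minors.* In a model of `K_{s+1,s+1}`, a given vertex lies in at most one branch set, so dropping
one branch set on each side leaves a model of `K_{s,s}` avoiding that vertex
(`exists_model_avoiding`). If the vertex is the dominant vertex of `G(s+1,N)`, then, since
`K_{s,s}` is connected, what remains lives in a single copy of `G(s,N)`
(`isMinor_of_model_avoiding`). At the bottom, a `K_{2,2}` minor of a star would yield an edge
avoiding the centre.

*Colourings.* If the colour of the dominant vertex appears in all `N+1` copies, the dominant
vertex has `N+1` neighbours of its own colour. Otherwise some copy misses that colour, so uses
one colour fewer, and the induction hypothesis applies to it (`exists_monochromatic_degree`).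
-/

open SimpleGraph

universe u v

/-- `B` is a family of branch sets realising `H` as a minor of `G`. -/
def IsModel {V : Type u} {α : Type v} (H : SimpleGraph α) (G : SimpleGraph V)
    (B : α → Set V) : Prop :=
  (∀ a, (B a).Nonempty) ∧
  (∀ a, (G.induce (B a)).Connected) ∧
  (Pairwise fun a b => Disjoint (B a) (B b)) ∧
  (∀ a b, H.Adj a b → ∃ x ∈ B a, ∃ y ∈ B b, G.Adj x y)

/-- Models restrict along embeddings of the pattern graph. -/
lemma IsModel.comp {V α β : Type*} {H : SimpleGraph α} {H' : SimpleGraph β}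
    {G : SimpleGraph V} {B : α → Set V} (hB : IsModel H G B) (f : β → α)
    (hf : Function.Injective f) (hadj : ∀ a b, H'.Adj a b → H.Adj (f a) (f b)) :
    IsModel H' G (fun b => B (f b)) :=
  ⟨fun _ => hB.1 _, fun _ => hB.2.1 _, fun _ _ hab => hB.2.2.1 (hf.ne hab),
    fun a b h => hB.2.2.2 _ _ (hadj a b h)⟩

lemma exists_model_avoiding {V : Type*} {G : SimpleGraph V} {s : ℕ}
    (h : IsMinor (completeBipartiteGraph (Fin (s + 1)) (Fin (s + 1))) G) (v : V) :
    ∃ B, IsModel (completeBipartiteGraph (Fin s) (Fin s)) G B ∧ ∀ a, v ∉ B a := by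
  obtain ⟨B, hB⟩ := h
  -- Drop the left branch set `i` and the right branch set `j`, chosen so that no other contains `v`.
  suffices ∃ i j : Fin (s + 1), (∀ i', i' ≠ i → v ∉ B (Sum.inl i')) ∧
      (∀ j', j' ≠ j → v ∉ B (Sum.inr j')) by
    obtain ⟨i, j, hi, hj⟩ := this
    refine ⟨_, IsModel.comp (H' := completeBipartiteGraph (Fin s) (Fin s)) hB
      (Sum.map i.succAbove j.succAbove)
      (Sum.map_injective.2 ⟨Fin.succAbove_right_injective, Fin.succAbove_right_injective⟩)
      ?_, ?_⟩
    · rintro (a | a) (b | b) <;> simp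
    · rintro (a | a)
      · exact hi _ (Fin.succAbove_ne i a)
      · exact hj _ (Fin.succAbove_ne j a)
  have huniq : ∀ a b, v ∈ B a → v ∈ B b → a = b := fun a b ha hb => by
    by_contra hab
    exact Set.disjoint_left.1 (hB.2.2.1 hab) ha hb
  by_cases hv : ∃ a, v ∈ B a
  · obtain ⟨a | a, ha⟩ := hv
    · refine ⟨a, 0, fun i hi h => hi ?_, fun j _ h => ?_⟩
      · exact Sum.inl_injective (huniq _ _ h ha)
      · exact Sum.inr_ne_inl (huniq _ _ h ha)
    · refine ⟨0, a, fun i _ h => ?_, fun j hj h => hj ?_⟩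
      · exact Sum.inl_ne_inr (huniq _ _ h ha)
      · exact Sum.inr_injective (huniq _ _ h ha)
  · push Not at hv
    exact ⟨0, 0, fun _ _ => hv _, fun _ _ => hv _⟩

lemma GGraph_zero_adj {N : ℕ} (x y : Fin (N + 2)) :
    (GGraph 0 N).Adj x y ↔ x ≠ y ∧ (x = 0 ∨ y = 0) := by
  simp only [GGraph]
  exact SimpleGraph.fromRel_adj _ _ _

lemma GGraph_succ_adj_none {t N : ℕ} (p : Fin (N + 1) × GVert t N) :
    (GGraph (t + 1) N).Adj (none : Option (Fin (N + 1) × GVert t N))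
      (some p : Option (Fin (N + 1) × GVert t N)) := by
  simp only [GGraph]
  exact (SimpleGraph.fromRel_adj _ _ _).2 ⟨nofun, Or.inl trivial⟩

lemma GGraph_succ_adj_some {t N : ℕ} (i j : Fin (N + 1)) (x y : GVert t N) :
    (GGraph (t + 1) N).Adj (some (i, x) : Option (Fin (N + 1) × GVert t N))
      (some (j, y) : Option (Fin (N + 1) × GVert t N)) ↔ i = j ∧ (GGraph t N).Adj x y := by
  simp only [GGraph]
  refine (SimpleGraph.fromRel_adj _ _ _).trans ⟨?_, ?_⟩
  · rintro ⟨-, h | h⟩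
    · exact h
    · exact ⟨h.1.symm, h.2.symm⟩
  · rintro ⟨h, h'⟩
    refine ⟨fun e => ?_, Or.inl ⟨h, h'⟩⟩
    injection e with e
    exact h'.ne (congrArg Prod.snd e)

/-- The index of the copy containing a vertex of `G(t+3,N)`; the dominant vertex gets the
arbitrary value `0`. -/
def copyIndex {t N : ℕ} : GVert (t + 1) N → Fin (N + 1)
  | none => 0
  | some (i, _) => i

lemma copyIndex_eq_of_adj {t N : ℕ} {x y : GVert (t + 1) N} (h : (GGraph (t + 1) N).Adj x y)
    (hx : x ≠ (none : Option (Fin (N + 1) × GVert t N)))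
    (hy : y ≠ (none : Option (Fin (N + 1) × GVert t N))) : copyIndex x = copyIndex y := by
  match x, y with
  | none, _ => exact absurd rfl hx
  | some _, none => exact absurd rfl hy
  | some (i, x), some (j, y) => exact ((GGraph_succ_adj_some i j x y).1 h).1

/-- A model of `K_{s+1,s+1}` in `G(t+3,N)` avoiding the dominant vertex lies in one copy of
`G(t+2,N)`: adjacent vertices other than the dominant one have the same `copyIndex`, which is thus
constant on the union of the branch sets, as that union is connected. -/
lemma isMinor_of_model_avoiding {t N s : ℕ} {B : Fin (s + 1) ⊕ Fin (s + 1) → Set (GVert (t + 1) N)}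
    (hB : IsModel (completeBipartiteGraph (Fin (s + 1)) (Fin (s + 1))) (GGraph (t + 1) N) B)
    (hnone : ∀ a, (none : Option (Fin (N + 1) × GVert t N)) ∉ B a) :
    IsMinor (completeBipartiteGraph (Fin (s + 1)) (Fin (s + 1))) (GGraph t N) := by
  have hne : ∀ a, ∀ x ∈ B a, x ≠ (none : Option (Fin (N + 1) × GVert t N)) :=
    fun a x hx e => hnone a (e ▸ hx)
  have hsame : ∀ a, ∀ x ∈ B a, ∀ y ∈ B a, copyIndex x = copyIndex y := by
    intro a x hx y hy
    obtain ⟨w⟩ := (hB.2.1 a).preconnected ⟨x, hx⟩ ⟨y, hy⟩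
    have key : ∀ (u v : B a), ((GGraph (t + 1) N).induce (B a)).Walk u v →
        copyIndex u.1 = copyIndex v.1 := by
      intro u v w
      induction w with
      | nil => rfl
      | cons h _ ih =>
        exact (copyIndex_eq_of_adj h (hne a _ (Subtype.prop _)) (hne a _ (Subtype.prop _))).trans ih
    exact key _ _ w
  have hadj : ∀ a b, (completeBipartiteGraph (Fin (s + 1)) (Fin (s + 1))).Adj a b →
      ∀ x ∈ B a, ∀ y ∈ B b, copyIndex x = copyIndex y := by
    intro a b hab x hx y hy
    obtain ⟨x', hx', y', hy', h⟩ := hB.2.2.2 a b hab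
    rw [hsame a x hx x' hx', hsame b y hy y' hy']
    exact copyIndex_eq_of_adj h (hne a _ hx') (hne b _ hy')
  obtain ⟨x₀, hx₀⟩ := hB.1 (Sum.inl 0)
  obtain ⟨y₀, hy₀⟩ := hB.1 (Sum.inr 0)
  have hall : ∀ a, ∀ x ∈ B a, copyIndex x = copyIndex x₀ := by
    rintro (a | a) x hx
    · rw [hadj (Sum.inl a) (Sum.inr 0) (by simp) x hx y₀ hy₀,
        hadj (Sum.inl 0) (Sum.inr 0) (by simp) x₀ hx₀ y₀ hy₀]
    · exact (hadj (Sum.inl 0) (Sum.inr a) (by simp) x₀ hx₀ x hx).symm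
  set i := copyIndex x₀
  let emb : GVert t N → GVert (t + 1) N := fun y => some (i, y)
  have hemb : Function.Injective emb := by
    intro y y' h
    injection h with h
    exact congrArg Prod.snd h
  have hembadj : ∀ x y, (GGraph (t + 1) N).Adj (emb x) (emb y) ↔ (GGraph t N).Adj x y :=
    fun x y => (GGraph_succ_adj_some i i x y).trans (by simp)
  have hsurj : ∀ a, ∀ x ∈ B a, ∃ y, emb y = x := by
    intro a x hx
    have h1 := hne a x hx
    have h2 := hall a x hx
    match x with
    | none => exact absurd rfl h1
    | some (j, y) =>
      have : j = i := h2
      exact ⟨y, congrArg (fun k => (some (k, y) : Option (Fin (N + 1) × GVert t N))) this.symm⟩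
  refine ⟨fun a => emb ⁻¹' B a, ?_, ?_, ?_, ?_⟩
  · intro a
    obtain ⟨x, hx⟩ := hB.1 a
    obtain ⟨y, rfl⟩ := hsurj a x hx
    exact ⟨y, hx⟩
  · intro a
    let e : (emb ⁻¹' B a) ≃ B a := Equiv.ofBijective (fun y => ⟨emb y.1, y.2⟩) <| by
      constructor
      · intro y y' h
        exact Subtype.ext (hemb (congrArg Subtype.val h))
      · rintro ⟨x, hx⟩
        obtain ⟨y, rfl⟩ := hsurj a x hx
        exact ⟨⟨y, hx⟩, rfl⟩
    let φ : (GGraph t N).induce (emb ⁻¹' B a) ≃g (GGraph (t + 1) N).induce (B a) :=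
      ⟨e, fun {x y} => hembadj x.1 y.1⟩
    exact φ.connected_iff.2 (hB.2.1 a)
  · intro a b hab
    exact (hB.2.2.1 hab).preimage emb
  · intro a b hab
    obtain ⟨x, hx, y, hy, h⟩ := hB.2.2.2 a b hab
    obtain ⟨x, rfl⟩ := hsurj a x hx
    obtain ⟨y, rfl⟩ := hsurj b y hy
    exact ⟨x, hx, y, hy, (hembadj x y).1 h⟩

lemma not_isMinor_GGraph (t N : ℕ) :
    ¬ IsMinor (completeBipartiteGraph (Fin (t + 2)) (Fin (t + 2))) (GGraph t N) := by
  induction t with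
  | zero =>
    intro h
    obtain ⟨B, hB, h0⟩ := exists_model_avoiding h (0 : Fin (N + 2))
    obtain ⟨x, hx, y, hy, hxy⟩ := hB.2.2.2 (Sum.inl 0) (Sum.inr 0) (by simp)
    rcases ((GGraph_zero_adj x y).1 hxy).2 with e | e
    · exact h0 _ (e ▸ hx)
    · exact h0 _ (e ▸ hy)
  | succ t ih =>
    intro h
    obtain ⟨B, hB, h0⟩ := exists_model_avoiding h (none : Option (Fin (N + 1) × GVert t N))
    exact ih (isMinor_of_model_avoiding hB h0)

instance GVert_finite (t N : ℕ) : Finite (GVert t N) := by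
  induction t with
  | zero => exact inferInstanceAs (Finite (Fin (N + 2)))
  | succ t ih => exact inferInstanceAs (Finite (Option (Fin (N + 1) × GVert t N)))

lemma lt_ncard_of_injective {V C : Type*} [Finite V] {N : ℕ} (G : SimpleGraph V) (c : V → C)
    (v : V) (f : Fin (N + 1) → V) (hf : Function.Injective f)
    (h : ∀ i, G.Adj v (f i) ∧ c (f i) = c v) :
    N < {w | G.Adj v w ∧ c w = c v}.ncard := by
  have h1 : (Set.range f).ncard = N + 1 := by
    rw [← Set.image_univ, Set.ncard_image_of_injective _ hf, Set.ncard_univ, Nat.card_fin]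
  have h2 : (Set.range f).ncard ≤ {w | G.Adj v w ∧ c w = c v}.ncard :=
    Set.ncard_le_ncard (by rintro _ ⟨i, rfl⟩; exact h i) (Set.toFinite _)
  omega

/-- If `G(t+2,N)` is coloured with at most `t+1` colours, then some vertex has more than `N`
neighbours of its own colour. The palette `S` is allowed to vary inside a fixed type of colours,
so that a colour can be removed in the induction. -/
lemma exists_monochromatic_degree {C : Type*} [DecidableEq C] (t N : ℕ) (S : Finset C)
    (hS : S.card ≤ t + 1) (c : GVert t N → C) (hc : ∀ v, c v ∈ S) :
    ∃ v, N < {w | (GGraph t N).Adj v w ∧ c w = c v}.ncard := by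
  induction t generalizing S with
  | zero =>
    refine ⟨(0 : Fin (N + 2)), lt_ncard_of_injective _ c _ Fin.succ (Fin.succ_injective _) ?_⟩
    intro i
    exact ⟨(GGraph_zero_adj _ _).2 ⟨(Fin.succ_ne_zero i).symm, Or.inl rfl⟩,
      Finset.card_le_one.1 hS _ (hc _) _ (hc _)⟩
  | succ t ih =>
    let root : GVert (t + 1) N := (none : Option (Fin (N + 1) × GVert t N))
    let emb : Fin (N + 1) → GVert t N → GVert (t + 1) N := fun i y => some (i, y)
    have hemb : ∀ i j x y, emb i x = emb j y → i = j ∧ x = y := by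
      intro i j x y h
      injection h with h
      exact Prod.ext_iff.1 h
    by_cases h : ∀ i, ∃ y, c (emb i y) = c root
    · choose y hy using h
      exact ⟨root, lt_ncard_of_injective _ c _ (fun i => emb i (y i))
        (fun i j e => (hemb _ _ _ _ e).1) fun i => ⟨GGraph_succ_adj_none _, hy i⟩⟩
    · push Not at h
      obtain ⟨i, hi⟩ := h
      obtain ⟨v, hv⟩ := ih (S.erase (c root))
        (by rw [Finset.card_erase_of_mem (hc root)]; omega) (fun y => c (emb i y))
        (fun y => Finset.mem_erase.2 ⟨hi y, hc _⟩)
      refine ⟨emb i v, hv.trans_le ?_⟩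
      rw [← Set.ncard_image_of_injective _
        (show Function.Injective (emb i) from fun x y e => (hemb _ _ _ _ e).2)]
      refine Set.ncard_le_ncard ?_ (Set.toFinite _)
      rintro _ ⟨w, ⟨hw, hcw⟩, rfl⟩
      exact ⟨(GGraph_succ_adj_some i i v w).2 ⟨rfl, hw⟩, hcw⟩

/-- For integers `s ≥ 2` and `N ≥ 1`, the graph `G(s,N)` has no `K_{s,s}` minor and is not
`(s-1, N)`-colourable. -/
theorem stmt3 (s N : ℕ) (hs : 2 ≤ s) (hN : 1 ≤ N) :
    ¬ IsMinor (completeBipartiteGraph (Fin s) (Fin s)) (GGraph (s - 2) N) ∧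
    ¬ DefColorable (GGraph (s - 2) N) (s - 1) N := by
  obtain ⟨t, rfl⟩ := Nat.exists_eq_add_of_le' hs
  refine ⟨not_isMinor_GGraph t N, ?_⟩
  rintro ⟨c, hc⟩
  obtain ⟨v, hv⟩ := exists_monochromatic_degree t N (Finset.univ : Finset (Fin (t + 1)))
    (by simp) c (fun _ => Finset.mem_univ _)
  exact absurd (hc v) (not_le.2 hv)
end

section
/- Let a, a′ be positive reals, b, b′ reals, and δ, ℓ positive integers satisfying: (1) 2a ≥ δ > a′; (2) (δ − a′)ℓ > (2a − a′)δ; and (3) (δ − a′)ℓ² − ((2a − a′)δ + b′ − δ + a′)ℓ − (2a − a′ + 2b − b′)δ > 0. Let G be a finite simple graph with n ≥ 1 vertices, at most an + b edges, and minimum degree at least δ, such that every spanning bipartite subgraph of G has at most a′n + b′ edges. Then G has an (ℓ−1)-light edge. -/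
/-!
Suppose no edge is `(ℓ-1)`-light. Then the set `X` of vertices of degree less than `ℓ` is
independent, so the cut between `X` and its complement `Y` has at least `δ|X|` edges
(`mul_card_le_cut`), whence `δ|X| ≤ a'n + b'`. Counting degrees gives
`δ|X| + ℓ|Y| ≤ 2(an + b)` (`degree_count`). Eliminating `|X|` and `|Y|` from these two
inequalities and `|X| + |Y| = n` (using `ℓ > δ`) yields
`n((δ - a')ℓ - (2a - a')δ) ≤ (ℓ - δ)b' + 2bδ`.
As `δ ≥ 1`, the graph has a vertex of degree at least `ℓ`, so `n ≥ ℓ + 1`, and then this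
inequality contradicts the third numerical hypothesis.
-/

open SimpleGraph

universe u v

/-- If `X` is independent and its vertices have degree at least `δ`, the cut `(X, Xᶜ)` has at
least `δ|X|` edges, since the edges at distinct vertices of `X` are distinct. -/
lemma mul_card_le_cut {V : Type} [Fintype V] [DecidableEq V] (G : SimpleGraph V)
    [DecidableRel G.Adj] (X : Finset V) (δ : ℕ) (hδ : ∀ v ∈ X, δ ≤ G.degree v)
    (hX : ∀ u ∈ X, ∀ v ∈ X, ¬ G.Adj u v) :
    δ * X.card ≤
      {e ∈ G.edgeSet | ∀ x y, e = s(x, y) → (x ∈ (X : Set V) ↔ y ∉ (X : Set V))}.ncard := by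
  have hdisj : ∀ u ∈ X, ∀ v ∈ X, u ≠ v →
      Disjoint (G.incidenceFinset u) (G.incidenceFinset v) := by
    intro u hu v hv huv
    rw [Finset.disjoint_left]
    intro e heu hev
    rw [mem_incidenceFinset] at heu hev
    exact hX u hu v hv (G.adj_of_mem_incidenceSet huv heu hev)
  calc δ * X.card ≤ ∑ v ∈ X, G.degree v := by
        rw [mul_comm, ← smul_eq_mul]
        exact Finset.card_nsmul_le_sum _ _ _ hδ
    _ = (X.biUnion fun v => G.incidenceFinset v).card := by
        rw [Finset.card_biUnion hdisj]
        simp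
    _ ≤ _ := by
        rw [← Set.ncard_coe_finset]
        refine Set.ncard_le_ncard ?_ (Set.toFinite _)
        intro e he
        simp only [Finset.coe_biUnion, Set.mem_iUnion, Finset.mem_coe,
          mem_incidenceFinset] at he
        obtain ⟨v, hv, heG, hve⟩ := he
        refine ⟨heG, ?_⟩
        rintro x y rfl
        have hadj : G.Adj x y := heG
        rcases Sym2.mem_iff.1 hve with rfl | rfl
        · simp only [Finset.mem_coe]
          exact ⟨fun hx hy => hX _ hx _ hy hadj, fun _ => hv⟩
        · simp only [Finset.mem_coe]
          exact ⟨fun hx hy => hX _ hx _ hy hadj, fun h => absurd hv h⟩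

lemma degree_count {V : Type} [Fintype V] [DecidableEq V] (G : SimpleGraph V)
    [DecidableRel G.Adj] (δ l : ℕ) (hδ : ∀ v, δ ≤ G.degree v) :
    δ * (Finset.univ.filter fun v => G.degree v < l).card
      + l * (Finset.univ.filter fun v => ¬ G.degree v < l).card ≤ 2 * G.edgeSet.ncard := by
  have hE : G.edgeSet.ncard = G.edgeFinset.card := by
    rw [← Set.ncard_coe_finset, coe_edgeFinset]
  rw [hE, ← G.sum_degrees_eq_twice_card_edges,
    ← Finset.sum_filter_add_sum_filter_not Finset.univ (fun v => G.degree v < l)]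
  gcongr
  · rw [mul_comm, ← smul_eq_mul]
    exact Finset.card_nsmul_le_sum _ _ _ fun v _ => hδ v
  · rw [mul_comm, ← smul_eq_mul]
    refine Finset.card_nsmul_le_sum _ _ _ fun v hv => ?_
    simpa using hv

/-- The light edge lemma: under the stated density and degree hypotheses, `G` has an
`(ℓ-1)`-light edge. The number of edges of the largest spanning bipartite subgraph of `G`
induced by a bipartition `(S, Sᶜ)` is expressed as the number of edges of `G` joining `S`
to its complement. -/
theorem stmt6 {V : Type} [Fintype V] [Nonempty V] (G : SimpleGraph V)
    (a a' b b' : ℝ) (δ l : ℕ) (ha : 0 < a) (ha' : 0 < a') (hδ : 1 ≤ δ) (hl : 1 ≤ l)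
    (h1a : (δ : ℝ) ≤ 2 * a) (h1b : a' < (δ : ℝ))
    (h2 : (2 * a - a') * (δ : ℝ) < ((δ : ℝ) - a') * (l : ℝ))
    (h3 : 0 < ((δ : ℝ) - a') * (l : ℝ) ^ 2
      - ((2 * a - a') * (δ : ℝ) + b' - (δ : ℝ) + a') * (l : ℝ)
      - (2 * a - a' + 2 * b - b') * (δ : ℝ))
    (hE : (G.edgeSet.ncard : ℝ) ≤ a * (Fintype.card V : ℝ) + b)
    (hmin : ∀ v : V, δ ≤ {w | G.Adj v w}.ncard)
    (hbip : ∀ S : Set V,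
      (({e ∈ G.edgeSet | ∀ x y, e = s(x, y) → (x ∈ S ↔ y ∉ S)}.ncard : ℝ)) ≤
        a' * (Fintype.card V : ℝ) + b') :
    ∃ u v : V, G.Adj u v ∧ {w | G.Adj u w}.ncard ≤ l - 1 ∧ {w | G.Adj v w}.ncard ≤ l - 1 := by
  classical
  have hdeg : ∀ v : V, {w | G.Adj v w}.ncard = G.degree v := by
    intro v
    rw [← G.card_neighborFinset_eq_degree, ← Set.ncard_coe_finset, coe_neighborFinset]
    rfl
  simp only [hdeg] at hmin ⊢
  by_contra! hno
  set X := Finset.univ.filter fun v => G.degree v < l with hXdef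
  set Y := Finset.univ.filter fun v => ¬ G.degree v < l with hYdef
  have hX : ∀ u ∈ X, ∀ v ∈ X, ¬ G.Adj u v := by
    intro u hu v hv huv
    simp only [hXdef, Finset.mem_filter, Finset.mem_univ, true_and] at hu hv
    have := hno u v huv (by omega)
    omega
  have hcutN := mul_card_le_cut G X δ (fun v _ => hmin v) hX
  have hcountN : δ * X.card + l * Y.card ≤ 2 * G.edgeSet.ncard := degree_count G δ l hmin
  have hXYN : X.card + Y.card = Fintype.card V :=
    Finset.card_filter_add_card_filter_not _
  -- A vertex of small degree has a neighbour, which is then of large degree.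
  have hbig : ∃ v, l ≤ G.degree v := by
    by_contra! hsmall
    obtain ⟨v⟩ := (inferInstance : Nonempty V)
    obtain ⟨w, hw⟩ := (G.degree_pos_iff_exists_adj v).1 (lt_of_lt_of_le hδ (hmin v))
    exact hX v (by simp [hXdef, hsmall]) w (by simp [hXdef, hsmall]) hw
  obtain ⟨v, hv⟩ := hbig
  have hnN : l + 1 ≤ Fintype.card V := by
    have := G.degree_lt_card_verts v
    omega
  have hcut : (δ : ℝ) * X.card ≤ a' * Fintype.card V + b' :=
    le_trans (by exact_mod_cast hcutN) (hbip X)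
  have hcount : (δ : ℝ) * X.card + l * Y.card ≤ 2 * G.edgeSet.ncard := by
    exact_mod_cast hcountN
  have hXY : (X.card : ℝ) + Y.card = Fintype.card V := by exact_mod_cast hXYN
  have hn : (l : ℝ) + 1 ≤ Fintype.card V := by exact_mod_cast hnN
  have hδpos : (0 : ℝ) < δ := by exact_mod_cast hδ
  generalize (Fintype.card V : ℝ) = n at *
  generalize (X.card : ℝ) = x at *
  generalize (Y.card : ℝ) = y at *
  have hlδ : (δ : ℝ) < l := by
    have h : ((δ : ℝ) - a') * δ < (δ - a') * l := by nlinarith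
    exact lt_of_mul_lt_mul_left h (by linarith)
  have hy1 : ((l : ℝ) - δ) * y ≤ (2 * a - δ) * n + 2 * b := by
    have : x = n - y := by linarith
    subst this
    linarith
  have hy2 : ((δ : ℝ) - a') * n - b' ≤ δ * y := by
    have : x = n - y := by linarith
    subst this
    linarith
  have hmain : n * (((δ : ℝ) - a') * l - (2 * a - a') * δ) ≤ (l - δ) * b' + 2 * b * δ := by
    have e1 := mul_le_mul_of_nonneg_left hy2 (sub_nonneg.2 hlδ.le)
    have e2 := mul_le_mul_of_nonneg_left hy1 hδpos.le
    linarith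
  have hlow := mul_le_mul_of_nonneg_right hn (sub_nonneg.2 h2.le)
  linarith
end

section
/- Let a, a′ be positive reals, b, b′ reals, and δ, ℓ positive integers satisfying: (1) 2a ≥ δ > a′; (2) (δ − a′)ℓ > (2a − a′)δ; and (3) (δ − a′)ℓ² − ((2a − a′)δ + b′ − δ + a′)ℓ − (2a − a′ + 2b − b′)δ > 0. Let G be a finite simple graph such that every subgraph H of G with minimum degree at least δ satisfies: (i) H has at most a|V(H)| + b edges, and (ii) every spanning bipartite subgraph of H has at most a′|V(H)| + b′ edges. Then G is (δ, ℓ−δ)-choosable. -/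
/-!
The proof rests on light edges. Conditions (1)–(3) force every edge set `K` inside `G` which is
nonempty to have an edge `xy` such that either `x` has degree less than `δ` in `K`, or both `x` and
`y` have degree less than `l` in `K` (`exists_light_edge`). Otherwise the non-isolated vertices of
`K` span a subgraph `H` of minimum degree at least `δ` in which the set `A` of vertices of degree
less than `l` is independent. With `B` the remaining vertices and `n = |A| + |B|`, counting the
edges between `A` and `B` gives `δ|A| ≤ a'n + b'`, and the handshake lemma gives
`l|B| + δ|A| ≤ 2an + 2b`. A vertex of `B` and its neighbours show `n ≥ l + 1`, and
eliminating `|A|` and `|B|` contradicts (3).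

Given such edges, the colouring is built by induction on the number of edges: delete the edge `xy`
and colour the rest. If putting `xy` back spoils the colouring, then some end of `xy` sees fewer
than `δ` colours on its neighbours: either its degree is less than `δ`, or it has more than `l - δ`
neighbours of its own colour among fewer than `l` neighbours. Recolouring that end with a colour
from its list which no neighbour uses gives defect `0` there and increases no other defect
(`recolour`).
-/

open SimpleGraph

universe u v

/-! ### Colouring from light edges -/

open Finset in
/-- If `K` differs from `K'` only in edges at `x`, and fewer than `δ` colours occur on the
`K`-neighbours of `x`, then recolouring `x` turns a list colouring of `K'` of defect `d` into one
of `K`. -/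
theorem recolour {V : Type} [Fintype V] [DecidableEq V] (K K' : SimpleGraph V)
    [DecidableRel K.Adj] [DecidableRel K'.Adj] (δ d : ℕ) (L : V → Finset ℕ)
    (hL : ∀ v, (L v).card = δ) (x : V)
    (hKK : ∀ u w, K.Adj u w → u ≠ x → w ≠ x → K'.Adj u w)
    (c : V → ℕ) (hc : ∀ v, c v ∈ L v)
    (hd : ∀ v, #{w | K'.Adj v w ∧ c w = c v} ≤ d)
    (hx : ((K.neighborFinset x).image c).card < δ) :
    ∃ c : V → ℕ, (∀ v, c v ∈ L v) ∧ ∀ v, #{w | K.Adj v w ∧ c w = c v} ≤ d := by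
  obtain ⟨q, hq, hqn⟩ := Finset.exists_mem_notMem_of_card_lt_card (hx.trans_eq (hL x).symm)
  have hqn' : ∀ w, K.Adj x w → c w ≠ q := by
    intro w hw h
    exact hqn (Finset.mem_image.2 ⟨w, by simpa using hw, h⟩)
  refine ⟨Function.update c x q, ?_, ?_⟩
  · intro v
    by_cases hv : v = x
    · subst hv; simpa using hq
    · simpa [hv] using hc v
  · intro v
    refine le_trans (Finset.card_le_card ?_) (hd v)
    intro w
    simp only [Finset.mem_filter, Finset.mem_univ, true_and]
    rintro ⟨hvw, hcw⟩
    by_cases hv : v = x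
    · subst hv
      have hw : w ≠ v := hvw.ne'
      simp only [Function.update_self, Function.update_of_ne hw] at hcw
      exact absurd hcw (hqn' w hvw)
    · by_cases hw : w = x
      · subst hw
        simp only [Function.update_self, Function.update_of_ne hv] at hcw
        exact absurd hcw.symm (hqn' v hvw.symm)
      · simp only [Function.update_of_ne hv, Function.update_of_ne hw] at hcw
        exact ⟨hKK v w hvw hv hw, hcw⟩

open Finset in
/-- Among fewer than `l` neighbours more than `l - δ` of which share one colour, fewer than `δ`
colours occur. -/
theorem card_image_lt {V : Type} [Fintype V] [DecidableEq V] (K : SimpleGraph V)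
    [DecidableRel K.Adj] (δ l : ℕ) (hδl : δ ≤ l) (c : V → ℕ) (x : V)
    (hdeg : K.degree x < l) (hbad : l - δ < #{w | K.Adj x w ∧ c w = c x}) :
    ((K.neighborFinset x).image c).card < δ := by
  have hsub : (K.neighborFinset x).image c ⊆
      insert (c x) (((K.neighborFinset x).filter (fun w => c w ≠ c x)).image c) := by
    intro q
    simp only [Finset.mem_image, Finset.mem_insert, Finset.mem_filter]
    rintro ⟨w, hw, rfl⟩
    by_cases h : c w = c x
    · exact Or.inl h
    · exact Or.inr ⟨w, ⟨hw, h⟩, rfl⟩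
  have h1 := (Finset.card_le_card hsub).trans (Finset.card_insert_le _ _)
  have h2 := Finset.card_image_le (s := (K.neighborFinset x).filter (fun w => c w ≠ c x)) (f := c)
  have h3 := Finset.card_filter_add_card_filter_not (s := K.neighborFinset x)
    (fun w => c w = c x)
  have h4 : (K.neighborFinset x).filter (fun w => c w = c x)
      = Finset.univ.filter (fun w => K.Adj x w ∧ c w = c x) := by
    ext w; simp
  rw [h4, SimpleGraph.card_neighborFinset_eq_degree] at h3
  simp only [ne_eq] at h1 h2
  omega

open Finset in
/-- A graph all of whose nonempty edge sets contain an edge `xy` with `deg x < δ`, or with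
`deg x < l` and `deg y < l`, has a list colouring of defect `l - δ` for lists of size `δ`. -/
theorem exists_colouring {V : Type} [Fintype V] (G : SimpleGraph V) (δ l : ℕ) (hδ : 1 ≤ δ)
    (hδl : δ ≤ l)
    (hlight : ∀ (K : SimpleGraph V) [DecidableRel K.Adj], K ≤ G → K ≠ ⊥ →
      ∃ x y, K.Adj x y ∧ (K.degree x < δ ∨ (K.degree x < l ∧ K.degree y < l)))
    (L : V → Finset ℕ) (hL : ∀ v, (L v).card = δ) :
    ∀ (n : ℕ) (K : SimpleGraph V) [DecidableRel K.Adj], K ≤ G → K.edgeSet.ncard = n →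
      ∃ c : V → ℕ, (∀ v, c v ∈ L v) ∧ ∀ v, #{w | K.Adj v w ∧ c w = c v} ≤ l - δ := by
  classical
  intro n
  induction n using Nat.strong_induction_on with
  | _ n ih =>
  intro K _ hKG hn
  by_cases hK : K = ⊥
  · subst hK
    have hne : ∀ v, (L v).Nonempty := fun v => by
      rw [← Finset.card_pos, hL]; omega
    choose c hc using hne
    exact ⟨c, hc, fun v => by simp⟩
  obtain ⟨x, y, hxy, hlt⟩ := hlight K hKG hK
  set K' := K.deleteEdges {s(x, y)} with hK'
  have hadj : ∀ u w, K'.Adj u w ↔ K.Adj u w ∧ s(u, w) ≠ s(x, y) := by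
    intro u w; simp [hK', SimpleGraph.deleteEdges_adj]
  have hlt' : K'.edgeSet.ncard < n := by
    rw [← hn]
    refine Set.ncard_lt_ncard ?_ (Set.toFinite _)
    rw [hK', SimpleGraph.edgeSet_deleteEdges]
    refine ⟨Set.sdiff_subset, fun h => ?_⟩
    exact (h (K.mem_edgeSet.2 hxy)).2 rfl
  obtain ⟨c, hc, hd⟩ := ih _ hlt' K' ((K.deleteEdges_le _).trans hKG) rfl
  -- Away from either end of the deleted edge, `K` and `K'` have the same edges.
  have hdx : ∀ u w, K.Adj u w → u ≠ x → w ≠ x → K'.Adj u w := by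
    intro u w h hu hw
    rw [hadj]
    refine ⟨h, ?_⟩
    rw [Ne, Sym2.eq_iff]; tauto
  have hdy : ∀ u w, K.Adj u w → u ≠ y → w ≠ y → K'.Adj u w := by
    intro u w h hu hw
    rw [hadj]
    refine ⟨h, ?_⟩
    rw [Ne, Sym2.eq_iff]; tauto
  by_cases hx : ((K.neighborFinset x).image c).card < δ
  · exact recolour K K' δ _ L hL x hdx c hc hd hx
  by_cases hy : ((K.neighborFinset y).image c).card < δ
  · exact recolour K K' δ _ L hL y hdy c hc hd hy
  rcases hlt with h | ⟨h, h'⟩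
  · exact absurd (lt_of_le_of_lt Finset.card_image_le
      (by rwa [SimpleGraph.card_neighborFinset_eq_degree])) hx
  refine ⟨c, hc, fun v => ?_⟩
  by_cases hvx : v = x
  · subst hvx
    exact not_lt.1 fun hb => hx (card_image_lt K δ l hδl c v h hb)
  by_cases hvy : v = y
  · subst hvy
    exact not_lt.1 fun hb => hy (card_image_lt K δ l hδl c v h' hb)
  refine le_trans (Finset.card_le_card ?_) (hd v)
  intro w
  simp only [Finset.mem_filter, Finset.mem_univ, true_and, hadj]
  rintro ⟨hvw, hcw⟩
  refine ⟨⟨hvw, ?_⟩, hcw⟩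
  rw [Ne, Sym2.eq_iff]; tauto

/-! ### Existence of light edges -/

/-- The elimination of `|A| = p` and `|B| = q` from the two edge counts, where `p + q ≥ l + 1`. -/
theorem light_edge_arith (a a' b b' δ l p q : ℝ) (hδ : 0 < δ)
    (h1a : δ ≤ 2 * a) (h1b : a' < δ)
    (h2 : (2 * a - a') * δ < (δ - a') * l)
    (h3 : 0 < (δ - a') * l ^ 2 - ((2 * a - a') * δ + b' - δ + a') * l
      - (2 * a - a' + 2 * b - b') * δ)
    (hcut : δ * p ≤ a' * (p + q) + b')
    (hsum : l * q + δ * p ≤ 2 * (a * (p + q) + b))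
    (hn : l + 1 ≤ p + q) : False := by
  have hl : δ < l := by
    by_contra! h
    nlinarith
  have e1 := mul_le_mul_of_nonneg_left hcut (sub_nonneg.2 hl.le)
  have e2 := mul_le_mul_of_nonneg_left hsum hδ.le
  have e3 := mul_le_mul_of_nonneg_left hn (sub_nonneg.2 h2.le)
  nlinarith

open Finset in
theorem exists_light_edge {V : Type} [Fintype V] (G : SimpleGraph V)
    (a a' b b' : ℝ) (δ l : ℕ) (hδ : 1 ≤ δ) (hl : 1 ≤ l)
    (h1a : (δ : ℝ) ≤ 2 * a) (h1b : a' < (δ : ℝ))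
    (h2 : (2 * a - a') * (δ : ℝ) < ((δ : ℝ) - a') * (l : ℝ))
    (h3 : 0 < ((δ : ℝ) - a') * (l : ℝ) ^ 2
      - ((2 * a - a') * (δ : ℝ) + b' - (δ : ℝ) + a') * (l : ℝ)
      - (2 * a - a' + 2 * b - b') * (δ : ℝ))
    (hH : ∀ H : G.Subgraph, (∀ v ∈ H.verts, δ ≤ {w | H.Adj v w}.ncard) →
      ((H.edgeSet.ncard : ℝ) ≤ a * (H.verts.ncard : ℝ) + b ∧
       ∀ S : Set V,
         (({e ∈ H.edgeSet | ∀ x y, e = s(x, y) → (x ∈ S ↔ y ∉ S)}.ncard : ℝ)) ≤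
           a' * (H.verts.ncard : ℝ) + b'))
    (K : SimpleGraph V) [DecidableRel K.Adj] (hKG : K ≤ G) (hK : K ≠ ⊥) :
    ∃ x y, K.Adj x y ∧ (K.degree x < δ ∨ (K.degree x < l ∧ K.degree y < l)) := by
  classical
  by_contra! hcon
  obtain ⟨x₀, y₀, hxy₀⟩ := SimpleGraph.ne_bot_iff_exists_adj.1 hK
  have hmin : ∀ x, 0 < K.degree x → δ ≤ K.degree x := by
    intro x hx
    obtain ⟨y, hy⟩ := (K.degree_pos_iff_exists_adj x).1 hx
    exact (hcon x y hy).1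
  let H : G.Subgraph :=
    { verts := {v | 0 < K.degree v}
      Adj := K.Adj
      adj_sub := fun h => hKG h
      edge_vert := fun {v w} h => (K.degree_pos_iff_exists_adj v).2 ⟨w, h⟩
      symm := K.symm }
  have hdegH : ∀ v, {w | H.Adj v w}.ncard = K.degree v := by
    intro v
    rw [← SimpleGraph.card_neighborFinset_eq_degree, ← Set.ncard_coe_finset]
    congr 1
    ext w; simp [H]
  have hedge : H.edgeSet = K.edgeSet := by
    ext e
    induction e with
    | _ u w => rfl
  obtain ⟨hE, hS⟩ := hH H (fun v hv => by rw [hdegH]; exact hmin v hv)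
  set A : Finset V := {v | 0 < K.degree v ∧ K.degree v < l} with hA
  set B : Finset V := {v | l ≤ K.degree v} with hB
  have hdisj : Disjoint A B := by
    rw [Finset.disjoint_left]
    intro v hv hv'
    simp only [hA, hB, Finset.mem_filter, Finset.mem_univ, true_and] at hv hv'
    omega
  have hverts : H.verts = ((A ∪ B : Finset V) : Set V) := by
    ext v
    simp only [H, hA, hB, Set.mem_ofPred_eq, Finset.coe_union, Set.mem_union, Finset.mem_coe,
      Finset.mem_filter, Finset.mem_univ, true_and]
    omega
  have hcard : H.verts.ncard = A.card + B.card := by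
    rw [hverts, Set.ncard_coe_finset, Finset.card_union_of_disjoint hdisj]
  have hsumA : δ * A.card ≤ ∑ v ∈ A, K.degree v := by
    rw [mul_comm, ← smul_eq_mul]
    refine Finset.card_nsmul_le_sum _ _ _ fun v hv => hmin v ?_
    exact (Finset.mem_filter.1 hv).2.1
  have hsumB : l * B.card ≤ ∑ v ∈ B, K.degree v := by
    rw [mul_comm, ← smul_eq_mul]
    exact Finset.card_nsmul_le_sum _ _ _ fun v hv => (Finset.mem_filter.1 hv).2
  have hhand : l * B.card + δ * A.card ≤ 2 * H.edgeSet.ncard := by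
    have h := K.sum_degrees_eq_twice_card_edges
    have hle : ∑ v ∈ A ∪ B, K.degree v ≤ ∑ v, K.degree v :=
      Finset.sum_le_sum_of_subset (Finset.subset_univ _)
    rw [Finset.sum_union hdisj] at hle
    have he : H.edgeSet.ncard = K.edgeFinset.card := by
      rw [hedge, ← SimpleGraph.coe_edgeFinset, Set.ncard_coe_finset]
    omega
  -- Each pair `(v, w)` with `v ∈ A` and `w` adjacent to `v` gives its own cut edge, since `A` is
  -- independent.
  have hind : ∀ v w, K.Adj v w → v ∈ A → w ∉ A := by
    intro v w hvw hv hw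
    have := (hcon v w hvw).2 (Finset.mem_filter.1 hv).2.2
    have := (Finset.mem_filter.1 hw).2.2
    omega
  have hcutA : δ * A.card ≤
      {e ∈ H.edgeSet | ∀ x y, e = s(x, y) → (x ∈ (A : Set V) ↔ y ∉ (A : Set V))}.ncard := by
    refine hsumA.trans ?_
    have h1 : ∑ v ∈ A, K.degree v = (A.sigma fun v => K.neighborFinset v).card := by
      rw [Finset.card_sigma]; rfl
    rw [h1, ← Set.ncard_coe_finset]
    refine Set.ncard_le_ncard_of_injOn (fun p => s(p.1, p.2)) ?_ ?_ (Set.toFinite _)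
    · rintro ⟨v, w⟩ hvw
      simp only [Finset.coe_sigma, Set.mem_sigma_iff, Finset.mem_coe,
        SimpleGraph.mem_neighborFinset] at hvw
      obtain ⟨hv, hvw⟩ := hvw
      have hw := hind v w hvw hv
      refine ⟨hvw, fun x y hxy => ?_⟩
      rcases Sym2.eq_iff.1 hxy with ⟨h, h'⟩ | ⟨h, h'⟩
      · simp only at h h'
        subst h h'
        simp [hv, hw]
      · simp only at h h'
        subst h h'
        simp [hv, hw]
    · rintro ⟨v, w⟩ hvw ⟨v', w'⟩ hvw' heq
      simp only [Finset.coe_sigma, Set.mem_sigma_iff, Finset.mem_coe,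
        SimpleGraph.mem_neighborFinset] at hvw hvw'
      rcases Sym2.eq_iff.1 heq with ⟨h, h'⟩ | ⟨h, h'⟩
      · simp only at h h'
        subst h h'; rfl
      · simp only at h h'
        subst h h'
        exact absurd hvw'.1 (hind _ _ hvw.2 hvw.1)
  have hBne : ∃ z, l ≤ K.degree z := by
    by_contra! h
    have := (hcon x₀ y₀ hxy₀).2 (h x₀)
    have := h y₀
    omega
  obtain ⟨z, hz⟩ := hBne
  have hbig : l + 1 ≤ A.card + B.card := by
    have hsub : insert z (K.neighborFinset z) ⊆ A ∪ B := by
      intro w hw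
      have hw' : w ∈ H.verts := by
        rcases Finset.mem_insert.1 hw with rfl | hw
        · exact lt_of_lt_of_le hl hz
        · exact (K.degree_pos_iff_exists_adj w).2 ⟨z, ((K.mem_neighborFinset z w).1 hw).symm⟩
      rw [hverts] at hw'
      exact hw'
    have h := Finset.card_le_card hsub
    rw [Finset.card_insert_of_notMem (by simp), Finset.card_union_of_disjoint hdisj,
      SimpleGraph.card_neighborFinset_eq_degree] at h
    omega
  have hS' := hS (A : Set V)
  rw [hcard] at hE hS'
  push_cast at hE hS'
  refine light_edge_arith a a' b b' δ l A.card B.card (by exact_mod_cast hδ) h1a h1b h2 h3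
    (le_trans (by exact_mod_cast hcutA) hS') ?_ (by exact_mod_cast hbig)
  have : (l * B.card + δ * A.card : ℝ) ≤ 2 * H.edgeSet.ncard := by exact_mod_cast hhand
  linarith

/-! ### Choosability -/

/-- If every subgraph `H` of `G` with minimum degree at least `δ` has at most `a|V(H)| + b`
edges and every spanning bipartite subgraph of such an `H` has at most `a'|V(H)| + b'` edges,
then (under the stated numerical conditions) `G` is `(δ, ℓ - δ)`-choosable. -/
theorem stmt7 {V : Type} [Fintype V] (G : SimpleGraph V)
    (a a' b b' : ℝ) (δ l : ℕ) (ha : 0 < a) (ha' : 0 < a') (hδ : 1 ≤ δ) (hl : 1 ≤ l)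
    (h1a : (δ : ℝ) ≤ 2 * a) (h1b : a' < (δ : ℝ))
    (h2 : (2 * a - a') * (δ : ℝ) < ((δ : ℝ) - a') * (l : ℝ))
    (h3 : 0 < ((δ : ℝ) - a') * (l : ℝ) ^ 2
      - ((2 * a - a') * (δ : ℝ) + b' - (δ : ℝ) + a') * (l : ℝ)
      - (2 * a - a' + 2 * b - b') * (δ : ℝ))
    (hH : ∀ H : G.Subgraph, (∀ v ∈ H.verts, δ ≤ {w | H.Adj v w}.ncard) →
      ((H.edgeSet.ncard : ℝ) ≤ a * (H.verts.ncard : ℝ) + b ∧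
       ∀ S : Set V,
         (({e ∈ H.edgeSet | ∀ x y, e = s(x, y) → (x ∈ S ↔ y ∉ S)}.ncard : ℝ)) ≤
           a' * (H.verts.ncard : ℝ) + b')) :
    Choosable G δ ((l : ℤ) - (δ : ℤ)) := by
  classical
  have hδl : δ ≤ l := by
    by_contra! h
    have h' : (l : ℝ) ≤ δ := by exact_mod_cast h.le
    have h0 : (0 : ℝ) ≤ δ := Nat.cast_nonneg δ
    nlinarith
  intro L hL
  obtain ⟨c, hc, hd⟩ := exists_colouring G δ l hδ hδl
    (fun K _ hKG hK => exists_light_edge G a a' b b' δ l hδ hl h1a h1b h2 h3 hH K hKG hK)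
    L hL _ G le_rfl rfl
  refine ⟨c, hc, fun v => ?_⟩
  have hv := hd v
  have he : {w | G.Adj v w ∧ c w = c v}.ncard
      = (Finset.univ.filter fun w => G.Adj v w ∧ c w = c v).card := by
    rw [← Set.ncard_coe_finset]; simp
  rw [he]
  omega
end

section
/- For every integer k ≥ 1 there exists an integer d such that every finite simple graph admitting a k-stack layout is (k+1, d)-choosable. -/
/-!
Put `ℓ = 4k(3k+1)`; the defect `d = ℓ` works. The key point (`exists_low_or_light`) is that a
graph with a `k`-stack layout and at least one edge has either a vertex of degree between `1`
and `k`, or an edge both of whose ends have degree at most `ℓ`. Given this, one colours by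
induction on the edge set (`exists_colouring`): in the first case delete all edges at the vertex,
colour the rest and recolour the vertex with a colour of its list that no neighbour uses; in the
second case delete the edge, since its ends can never have more than `ℓ` neighbours of any colour.

For the key point, suppose neither occurs. Let `A` be the set of vertices of degree between `1` and
`ℓ`, and `B` that of vertices of degree greater than `ℓ`. Every vertex of `A` has at least `k+1`
neighbours, all in `B`, so two of its edges lie in a common stack. Charging each vertex of `A` to
a vertex of `B` through such a pair of edges gives `|A| ≤ 3k|B|` (`card_le_of_two_in_stack`).
On the other hand, each stack has at most twice as many edges as there are non-isolated vertices
(`card_pairs_le`), so the degrees of the vertices in `B` sum to at most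
`4k(|A|+|B|) ≤ 4k(3k+1)|B| = ℓ|B|`, which is impossible.
-/

open SimpleGraph

universe u v

/-! ### Charging arguments in a stack layout -/

/-- `f` (the vertex positions) and `σ` (the stack of each edge) form a `k`-stack layout of `G`. -/
def IsStackLayout {V : Type*} {k : ℕ} (G : SimpleGraph V) (f : V → ℕ) (σ : Sym2 V → Fin k) : Prop :=
  ∀ a b c d : V, G.Adj a b → G.Adj c d → σ s(a, b) = σ s(c, d) →
    ¬(f a < f c ∧ f c < f b ∧ f b < f d)

open Classical in
/-- An edge from `u` rightwards to `v` is charged to `u` if it is the longest rightward edge at `u`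
in its stack, and to `v` otherwise; no vertex is charged twice in the same way for one stack. -/
lemma card_pairs_le {V : Type*} [Fintype V] {k : ℕ} {G : SimpleGraph V} {f : V → ℕ}
    (hf : Function.Injective f) {σ : Sym2 V → Fin k} (h : IsStackLayout G f σ)
    (S : Finset V) (hS : ∀ u v, G.Adj u v → u ∈ S) :
    (Finset.univ.filter fun p : V × V => G.Adj p.1 p.2 ∧ f p.1 < f p.2).card ≤ 2 * k * S.card := by
  let isMax : V × V → Prop := fun p =>
    ∀ w, G.Adj p.1 w → σ s(p.1, w) = σ s(p.1, p.2) → f w ≤ f p.2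
  let g : V × V → (Bool × Fin k) × V := fun p =>
    if isMax p then ((true, σ s(p.1, p.2)), p.1) else ((false, σ s(p.1, p.2)), p.2)
  have hcard : ((Finset.univ : Finset (Bool × Fin k)) ×ˢ S).card = 2 * k * S.card := by
    simp [Finset.card_product]
  rw [← hcard]
  -- Two non-maximal edges into the same vertex `v`: the longer one crosses the edge by which the
  -- inner left end reaches beyond `v`.
  have key : ∀ u u' v, G.Adj u v → G.Adj u' v → f u < f u' → f u' < f v →
      σ s(u, v) = σ s(u', v) → isMax (u', v) := by
    intro u u' v huv hu'v h1 h2 hs w hw hsw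
    by_contra hlt
    exact h u v u' w huv hw (hs.trans hsw.symm) ⟨h1, h2, not_le.mp hlt⟩
  refine Finset.card_le_card_of_injOn g ?_ ?_
  · rintro ⟨u, v⟩ hp
    simp only [Finset.coe_filter, Finset.mem_univ, true_and, Set.mem_ofPred_eq] at hp
    simp only [g]
    split_ifs
    · simpa using hS _ _ hp.1
    · simpa using hS _ _ hp.1.symm
  · rintro ⟨u, v⟩ hp ⟨u', v'⟩ hp' heq
    simp only [Finset.coe_filter, Finset.mem_univ, true_and, Set.mem_ofPred_eq] at hp hp'
    simp only [g] at heq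
    split_ifs at heq with m m' m'
    · simp only [Prod.mk.injEq, true_and] at heq
      obtain ⟨hs, rfl⟩ := heq
      have h1 := m v' hp'.1 hs.symm
      have h2 := m' v hp.1 hs
      rw [hf (le_antisymm h2 h1)]
    · simp at heq
    · simp at heq
    · simp only [Prod.mk.injEq, true_and] at heq
      obtain ⟨hs, rfl⟩ := heq
      rcases lt_trichotomy (f u) (f u') with hlt | he | hlt
      · exact absurd (key u u' v hp.1 hp'.1 hlt hp'.2 hs) m'
      · rw [hf he]
      · exact absurd (key u' u v hp'.1 hp.1 hlt hp.2 hs.symm) m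

open Classical in
/-- Let each `a ∈ A` have two edges to `B` in a common stack, going to `x` and `y` with `x` to the
left of `y`. If both go right, charge `a` to `x`; if both go left, charge it to `y`; otherwise charge
it to the last vertex of `B` before `a`. No vertex is charged twice in the same way for one stack. -/
lemma card_le_of_two_in_stack {V : Type*} {k : ℕ} {G : SimpleGraph V} {f : V → ℕ}
    (hf : Function.Injective f) {σ : Sym2 V → Fin k} (h : IsStackLayout G f σ)
    (A B : Finset V) (hAB : ∀ a ∈ A, a ∉ B)
    (hA : ∀ a ∈ A, ∃ x ∈ B, ∃ y ∈ B, G.Adj a x ∧ G.Adj a y ∧ f x < f y ∧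
      σ s(a, x) = σ s(a, y)) :
    A.card ≤ 3 * k * B.card := by
  choose! x hxB y hyB hax hay hxy hσ using hA
  have hpred : ∀ a ∈ A, f (x a) < f a → ∃ p ∈ B, f p < f a ∧ ∀ b ∈ B, f b < f a → f b ≤ f p := by
    intro a ha hlt
    obtain ⟨p, hp, hmax⟩ := Finset.exists_max_image (B.filter fun b => f b < f a) f
      ⟨x a, by simp [hxB a ha, hlt]⟩
    simp only [Finset.mem_filter] at hp hmax
    exact ⟨p, hp.1, hp.2, fun b hb hba => hmax b ⟨hb, hba⟩⟩
  choose! p hpB hpa hpmax using hpred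
  have hxa : ∀ a ∈ A, f (x a) ≠ f a := fun a ha e => hAB a ha (hf e ▸ hxB a ha)
  have hya : ∀ a ∈ A, f (y a) ≠ f a := fun a ha e => hAB a ha (hf e ▸ hyB a ha)
  let g : V → (Fin 3 × Fin k) × V := fun a =>
    if f a < f (x a) then ((0, σ s(a, x a)), x a)
    else if f (y a) < f a then ((1, σ s(a, x a)), y a)
    else ((2, σ s(a, x a)), p a)
  have hcard : ((Finset.univ : Finset (Fin 3 × Fin k)) ×ˢ B).card = 3 * k * B.card := by
    simp [Finset.card_product]
  rw [← hcard]
  refine Finset.card_le_card_of_injOn g ?_ ?_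
  · intro a ha
    have h1 := hxa a ha
    simp only [g]
    split_ifs with c1 c2
    · simpa using hxB a ha
    · simpa using hyB a ha
    · simpa using hpB a ha (by omega)
  · have main : ∀ a ∈ A, ∀ a' ∈ A, f a < f a' → g a ≠ g a' := by
      intro a ha a' ha' hlt heq
      have h1 := hxa a ha
      have h2 := hya a ha
      have h1' := hxa a' ha'
      have h2' := hya a' ha'
      have h3 := hxy a ha
      have h3' := hxy a' ha'
      simp only [g] at heq
      split_ifs at heq with c1 c2 c3 c4 c5 c6 c7 c8 <;> simp at heq
      · obtain ⟨hs, hx⟩ := heq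
        refine h a (x a) a' (y a') (hax a ha) (hay a' ha') (hs.trans (hσ a' ha')) ⟨hlt, ?_, ?_⟩
        · rw [hx]; exact c2
        · rw [hx]; exact h3'
      · obtain ⟨hs, hy⟩ := heq
        refine h (x a) a (y a') a' (hax a ha).symm (hay a' ha').symm ?_ ⟨?_, ?_, hlt⟩
        · rw [Sym2.eq_swap, hs, hσ a' ha', Sym2.eq_swap]
        · rw [← hy]; exact h3
        · rw [← hy]; assumption
      · obtain ⟨hs, hp⟩ := heq
        have hpx := hpmax a' ha' (by omega) (x a') (hxB a' ha') (by omega)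
        have hpa1 := hpa a ha (by omega)
        have hya' : f (y a) ≠ f a' := fun e => hAB a' ha' (hf e ▸ hyB a ha)
        have hpy := hpmax a' ha' (by omega) (y a) (hyB a ha)
        rw [← hp] at hpx hpy
        refine h (x a') a' a (y a) (hax a' ha').symm (hay a ha) ?_ ⟨?_, hlt, ?_⟩
        · rw [Sym2.eq_swap, ← hs, hσ a ha]
        · omega
        · by_contra hc
          have := hpy (by omega)
          omega
    intro a ha a' ha' heq
    rcases lt_trichotomy (f a) (f a') with hlt | he | hlt
    · exact absurd heq (main a ha a' ha' hlt)
    · exact hf he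
    · exact absurd heq.symm (main a' ha' a ha hlt)

/-! ### Low-degree vertices, light edges and defective colouring -/

open Classical in
lemma exists_low_or_light {V : Type*} [Fintype V] {k : ℕ} {G : SimpleGraph V} {f : V → ℕ}
    (hf : Function.Injective f) {σ : Sym2 V → Fin k} (h : IsStackLayout G f σ)
    (hne : ∃ u v, G.Adj u v) :
    (∃ v, 0 < G.degree v ∧ G.degree v ≤ k) ∨
    ∃ u v, G.Adj u v ∧ G.degree u ≤ 4 * k * (3 * k + 1) ∧ G.degree v ≤ 4 * k * (3 * k + 1) := by
  by_contra! hcon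
  obtain ⟨hlow, hlight⟩ := hcon
  set l := 4 * k * (3 * k + 1) with hl
  let A : Finset V := Finset.univ.filter fun v => 0 < G.degree v ∧ G.degree v ≤ l
  let B : Finset V := Finset.univ.filter fun v => l < G.degree v
  have hpos : ∀ u v, G.Adj u v → 0 < G.degree u := fun u v huv =>
    (G.degree_pos_iff_exists_adj u).2 ⟨v, huv⟩
  have hAcard : A.card ≤ 3 * k * B.card := by
    refine card_le_of_two_in_stack hf h A B ?_ ?_
    · intro a ha hb
      simp only [A, B, Finset.mem_filter, Finset.mem_univ, true_and] at ha hb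
      omega
    · intro a ha
      simp only [A, Finset.mem_filter, Finset.mem_univ, true_and] at ha
      have hB : ∀ w, G.Adj a w → w ∈ B := fun w hw => by
        simpa [B] using hlight a w hw ha.2
      obtain ⟨x, hx, y, hy, hxy, hs⟩ := Finset.exists_ne_map_eq_of_card_lt_of_maps_to
        (s := G.neighborFinset a) (t := (Finset.univ : Finset (Fin k)))
        (f := fun w => σ s(a, w)) (by simpa using hlow a ha.1) (by intro _ _; simp)
      rw [mem_neighborFinset] at hx hy
      rcases lt_or_gt_of_ne (fun e => hxy (hf e)) with hlt | hlt
      · exact ⟨x, hB x hx, y, hB y hy, hx, hy, hlt, hs⟩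
      · exact ⟨y, hB y hy, x, hB x hx, hy, hx, hlt, hs.symm⟩
  have hpairs := card_pairs_le hf h (A ∪ B) (by
    intro u v huv
    have := hpos u v huv
    simp only [A, B, Finset.mem_union, Finset.mem_filter, Finset.mem_univ, true_and]
    omega)
  have hunion := Finset.card_union_le A B
  set P := Finset.univ.filter fun p : V × V => G.Adj p.1 p.2 ∧ f p.1 < f p.2
  have hdeg : ∑ v ∈ B, G.degree v ≤ 2 * P.card := by
    calc ∑ v ∈ B, G.degree v = (B.sigma fun v => G.neighborFinset v).card := by
          simp [Finset.card_sigma]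
      _ ≤ ((Finset.univ : Finset Bool) ×ˢ P).card := by
          refine Finset.card_le_card_of_injOn
            (fun q => if f q.1 < f q.2 then (true, (q.1, q.2)) else (false, (q.2, q.1))) ?_ ?_
          · rintro ⟨u, v⟩ hq
            simp only [Finset.coe_sigma, Set.mem_sigma_iff, Finset.mem_coe,
              mem_neighborFinset] at hq
            have : f u ≠ f v := fun e => hq.2.ne (hf e)
            dsimp only
            split_ifs with hc
            · simp [P, hq.2, hc]
            · simp [P, hq.2.symm]; omega
          · rintro ⟨u, v⟩ _ ⟨u', v'⟩ _ heq
            dsimp only at heq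
            split_ifs at heq <;> simp at heq <;> obtain ⟨rfl, rfl⟩ := heq <;> rfl
      _ = 2 * P.card := by simp [Finset.card_product]
  have hlow' : B.card * (l + 1) ≤ ∑ v ∈ B, G.degree v := by
    rw [← smul_eq_mul]
    refine Finset.card_nsmul_le_sum _ _ _ fun v hv => ?_
    simpa [B] using hv
  have hle : B.card * (l + 1) ≤ l * B.card := by
    calc B.card * (l + 1) ≤ 2 * (2 * k * (A ∪ B).card) := by omega
      _ ≤ 2 * (2 * k * (3 * k * B.card + B.card)) := by gcongr; omega
      _ = l * B.card := by rw [hl]; ring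
  have hB0 : B.card = 0 := by nlinarith
  have hA0 : A.card = 0 := by simpa [hB0] using hAcard
  obtain ⟨u, v, huv⟩ := hne
  have hu := hpos u v huv
  by_cases hc : G.degree u ≤ l
  · exact Finset.notMem_empty u (Finset.card_eq_zero.1 hA0 ▸ by simp [A, hu, hc])
  · exact Finset.notMem_empty u (Finset.card_eq_zero.1 hB0 ▸ by simpa [B] using hc)

open Classical in
/-- The layout is fixed while the edge set shrinks, so the induction runs over all graphs on `V` for
which `f` and `σ` form a layout. -/
lemma exists_colouring_s8 {V : Type*} [Fintype V] {k : ℕ} {f : V → ℕ}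
    (hf : Function.Injective f) {σ : Sym2 V → Fin k} (L : V → Finset ℕ)
    (hL : ∀ v, (L v).card = k + 1) (G : SimpleGraph V) (h : IsStackLayout G f σ) :
    ∃ c : V → ℕ, (∀ v, c v ∈ L v) ∧
      ∀ v, {w | G.Adj v w ∧ c w = c v}.ncard ≤ 4 * k * (3 * k + 1) := by
  induction G using WellFoundedLT.induction with
  | ind G ih =>
  have hmono : ∀ G' : SimpleGraph V, G' ≤ G → IsStackLayout G' f σ :=
    fun G' hle a b c d hab hcd => h a b c d (hle hab) (hle hcd)
  by_cases hne : ∃ u v, G.Adj u v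
  swap
  · push Not at hne
    choose c hc using fun v => Finset.card_pos.1 (by rw [hL v]; omega : 0 < (L v).card)
    exact ⟨c, hc, fun v => by simp [hne]⟩
  rcases exists_low_or_light hf h hne with ⟨v, hpos, hdeg⟩ | ⟨x, y, hxy, hx, hy⟩
  · have hle : G.deleteEdges {e | v ∈ e} ≤ G := deleteEdges_le _
    have hlt : G.deleteEdges {e | v ∈ e} < G := by
      refine lt_of_le_of_ne hle fun e => ?_
      obtain ⟨w, hw⟩ := (G.degree_pos_iff_exists_adj v).1 hpos
      have hw' := hw
      rw [← e, deleteEdges_adj] at hw'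
      exact hw'.2 (by simp)
    obtain ⟨c, hc, hcol⟩ := ih _ hlt (hmono _ hle)
    obtain ⟨γ, hγ, hγ'⟩ := Finset.exists_mem_notMem_of_card_lt_card
      (s := (G.neighborFinset v).image c) (t := L v) (by
        rw [hL v]
        have := Finset.card_image_le (s := G.neighborFinset v) (f := c)
        rw [card_neighborFinset_eq_degree] at this
        omega)
    have hfree : ∀ w, G.Adj v w → c w ≠ γ := fun w hw e =>
      hγ' (Finset.mem_image.2 ⟨w, by simpa using hw, e⟩)
    refine ⟨Function.update c v γ, fun w => ?_, fun w => ?_⟩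
    · by_cases hw : w = v
      · subst hw; simpa using hγ
      · simpa [hw] using hc w
    · by_cases hw : w = v
      · subst hw
        have : {z | G.Adj w z ∧ Function.update c w γ z = Function.update c w γ w} = ∅ := by
          ext z
          simp only [Set.mem_ofPred_eq, Set.mem_empty_iff_false, iff_false, not_and]
          intro hz
          rw [Function.update_of_ne hz.ne', Function.update_self]
          exact hfree z hz
        rw [this, Set.ncard_empty]
        exact Nat.zero_le _
      · refine (Set.ncard_le_ncard ?_ (Set.toFinite _)).trans (hcol w)
        rintro z ⟨hz, hcz⟩
        rw [Function.update_of_ne hw] at hcz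
        have hzv : z ≠ v := by
          rintro rfl
          rw [Function.update_self] at hcz
          exact hfree w hz.symm hcz.symm
        rw [Function.update_of_ne hzv] at hcz
        refine ⟨?_, hcz⟩
        rw [deleteEdges_adj]
        refine ⟨hz, ?_⟩
        simp [Ne.symm hw, Ne.symm hzv]
  · have hle : G.deleteEdges {s(x, y)} ≤ G := deleteEdges_le _
    have hlt : G.deleteEdges {s(x, y)} < G := by
      refine lt_of_le_of_ne hle fun e => ?_
      have hw' := hxy
      rw [← e, deleteEdges_adj] at hw'
      exact hw'.2 (by simp)
    obtain ⟨c, hc, hcol⟩ := ih _ hlt (hmono _ hle)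
    have hlight : ∀ w, G.degree w ≤ 4 * k * (3 * k + 1) →
        {z | G.Adj w z ∧ c z = c w}.ncard ≤ 4 * k * (3 * k + 1) := by
      intro w hw
      refine le_trans ?_ hw
      rw [← card_neighborFinset_eq_degree, ← Set.ncard_coe_finset]
      exact Set.ncard_le_ncard (fun z hz => by simpa using hz.1) (Set.toFinite _)
    refine ⟨c, hc, fun w => ?_⟩
    by_cases hwx : w = x
    · exact hwx ▸ hlight x hx
    by_cases hwy : w = y
    · exact hwy ▸ hlight y hy
    refine (Set.ncard_le_ncard ?_ (Set.toFinite _)).trans (hcol w)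
    rintro z ⟨hz, hcz⟩
    refine ⟨?_, hcz⟩
    rw [deleteEdges_adj]
    refine ⟨hz, ?_⟩
    simp [hwx, hwy]

/-- For every integer `k ≥ 1` there exists an integer `d` such that every finite simple graph
admitting a `k`-stack layout is `(k+1, d)`-choosable. -/
theorem stmt8 (k : ℕ) (hk : 1 ≤ k) :
    ∃ d : ℤ, ∀ (V : Type) [Fintype V] (G : SimpleGraph V),
      HasStackLayout G k → Choosable G (k + 1) d := by
  refine ⟨((4 * k * (3 * k + 1) : ℕ) : ℤ), fun V _ G hG L hL => ?_⟩
  obtain ⟨f, hf, σ, hσ⟩ := hG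
  obtain ⟨c, hc, hcol⟩ := exists_colouring_s8 hf L hL G hσ
  exact ⟨c, hc, fun v => by exact_mod_cast hcol v⟩
end

section
/- For every integer k ≥ 1 there exists an integer d such that every finite simple graph admitting a k-queue layout is (2k+1, d)-choosable. -/
/-!
The proof rests on a light edge lemma: a graph with a `k`-queue layout and at least one edge has
either a non-isolated vertex of degree at most `2k`, or an edge both of whose ends have degree at
most `d = 4k(2k+1)` (`exists_light_edge`). Given this, choosability with defect `d` follows by
induction (`exists_list_coloring`): a vertex of degree at most `2k` can be coloured last, with a
colour missing from its neighbours, while an edge with both ends of degree at most `d` can simply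
be deleted, since its ends never exceed the defect bound.

For the light edge lemma, suppose every non-isolated vertex has degree at least `2k+1` and there
is no light edge. The set `A` of non-isolated vertices of degree at most `d` is then independent,
so all neighbours of `A` lie in the set `B` of vertices of degree more than `d`. A vertex `a` of
`A` has two neighbours joined to it in the same queue and on the same side of it. For a fixed queue
and side, absence of nesting forces the intervals spanned by these pairs to be internally disjoint,
hence `|A| ≤ 2k|B|` (`card_le_of_neighbors`). On the other hand, at most `2k(|A|+|B|)` edges
exist (`card_oriented_edges_le`), so `(d+1)|B| ≤ 4k(|A|+|B|) ≤ 4k(2k+1)|B| = d|B|`. Hence `B`,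
and with it `A`, is empty.
-/

open SimpleGraph

universe u v

/-- The function `σ` assigns every edge of `G` to one of `k` queues, and no two edges in a common
queue are nested in the vertex order induced by `f`. -/
def NoNesting {V : Type*} {k : ℕ} (f : V → ℕ) (σ : Sym2 V → Fin k) (G : SimpleGraph V) : Prop :=
  ∀ a b c d : V, G.Adj a b → G.Adj c d → σ s(a, b) = σ s(c, d) →
    ¬(f a < f c ∧ f c < f d ∧ f d < f b)

lemma NoNesting.mono {V : Type*} {k : ℕ} {f : V → ℕ} {σ : Sym2 V → Fin k} {G H : SimpleGraph V}
    (h : NoNesting f σ G) (hle : H ≤ G) : NoNesting f σ H :=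
  fun a b c d hab hcd => h a b c d (hle hab) (hle hcd)

open Classical in
/-- Counting edges, each oriented from its earlier to its later end: within a queue, an edge `uv`
with `u` before `v` is determined by `u` if `v` is the last neighbour of `u` in that queue, and is
determined by `v` otherwise, since then `u` must be the last earlier neighbour of `v`. -/
lemma card_oriented_edges_le {V : Type*} [Fintype V] {k : ℕ} {f : V → ℕ}
    (hf : Function.Injective f) {σ : Sym2 V → Fin k} {G : SimpleGraph V}
    (hG : NoNesting f σ G) :
    (Finset.univ.filter fun p : V × V => G.Adj p.1 p.2 ∧ f p.1 < f p.2).card ≤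
      2 * k * (Finset.univ.filter fun v => ∃ w, G.Adj v w).card := by
  set S := Finset.univ.filter fun v => ∃ w, G.Adj v w with hS
  let M : V → V → Prop := fun u v => ∀ w, G.Adj u w → σ s(u, w) = σ s(u, v) → f w ≤ f v
  let φ : V × V → Fin k × Bool × V := fun p =>
    (σ s(p.1, p.2), decide (M p.1 p.2), if M p.1 p.2 then p.1 else p.2)
  have hcard : ((Finset.univ : Finset (Fin k)) ×ˢ (Finset.univ : Finset Bool) ×ˢ S).card
      = 2 * k * S.card := by
    simp [Finset.card_product]; ring
  rw [← hcard]
  apply Finset.card_le_card_of_injOn φ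
  · rintro ⟨u, v⟩ hp
    simp only [Finset.coe_filter, Finset.mem_univ, true_and, Set.mem_ofPred_eq] at hp
    have hu : u ∈ S := by
      simp only [hS, Finset.mem_filter, Finset.mem_univ, true_and]; exact ⟨v, hp.1⟩
    have hv : v ∈ S := by
      simp only [hS, Finset.mem_filter, Finset.mem_univ, true_and]; exact ⟨u, hp.1.symm⟩
    simp only [φ, Finset.coe_product, Set.mem_prod, Finset.mem_coe, Finset.mem_univ, true_and]
    split_ifs <;> assumption
  · have key : ∀ u u' v, G.Adj u v → G.Adj u' v → f u' < f v → σ s(u, v) = σ s(u', v) →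
        ¬ M u v → ¬ f u < f u' := by
      intro u u' v h h' hlt hq hM huu
      simp only [M] at hM
      push Not at hM
      obtain ⟨w, hw, hqw, hlw⟩ := hM
      exact hG u w u' v hw h' (hqw.trans hq) ⟨huu, hlt, hlw⟩
    rintro ⟨u, v⟩ hp ⟨u', v'⟩ hp' heq
    simp only [Finset.coe_filter, Finset.mem_univ, true_and, Set.mem_ofPred_eq] at hp hp'
    simp only [φ, Prod.mk.injEq, decide_eq_decide] at heq
    obtain ⟨hq, hm, hv⟩ := heq
    by_cases hM : M u v
    · have hM' := hm.1 hM
      simp only [hM, hM', if_true] at hv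
      subst hv
      have h1 := hM v' hp'.1 hq.symm
      have h2 := hM' v hp.1 hq
      rw [hf (le_antisymm h2 h1)]
    · have hM' : ¬ M u' v' := fun h => hM (hm.2 h)
      simp only [hM, hM', if_false] at hv
      subst hv
      have h1 := key u u' v hp.1 hp'.1 hp'.2 hq hM
      have h2 := key u' u v hp'.1 hp.1 hp.2 hq.symm hM'
      rw [hf (le_antisymm (not_lt.1 h2) (not_lt.1 h1))]

open Classical in
lemma sum_degree_le {V : Type*} [Fintype V] {k : ℕ} {f : V → ℕ}
    (hf : Function.Injective f) {σ : Sym2 V → Fin k} {G : SimpleGraph V}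
    (hG : NoNesting f σ G) :
    ∑ v, G.degree v ≤ 4 * k * (Finset.univ.filter fun v => ∃ w, G.Adj v w).card := by
  have h := card_oriented_edges_le hf hG
  set P := Finset.univ.filter fun p : V × V => G.Adj p.1 p.2 ∧ f p.1 < f p.2 with hP
  have h2 : G.edgeFinset ⊆ P.image fun p => s(p.1, p.2) := by
    intro e he
    induction e with | _ a b =>
    rw [mem_edgeFinset, mem_edgeSet] at he
    rw [Finset.mem_image]
    rcases lt_or_gt_of_ne (hf.ne he.ne) with hlt | hlt
    · exact ⟨(a, b), by simp [hP, he, hlt], rfl⟩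
    · exact ⟨(b, a), by simp [hP, he.symm, hlt], Sym2.eq_swap⟩
  have h3 := (Finset.card_le_card h2).trans Finset.card_image_le
  rw [sum_degrees_eq_twice_card_edges]
  nlinarith

open Classical in
/-- If every vertex of `A` has more than `2k` neighbours, all in `B`, then some two of its edges
share a queue and a direction. Among vertices of `A` with the same queue and direction, the
spans of these pairs of neighbours are internally disjoint, so the earlier neighbours are
distinct. -/
lemma card_le_of_neighbors {V : Type*} [Fintype V] {k : ℕ} {f : V → ℕ}
    (hf : Function.Injective f) {σ : Sym2 V → Fin k} {G : SimpleGraph V}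
    (hG : NoNesting f σ G) (A B : Finset V) (hdeg : ∀ a ∈ A, 2 * k < G.degree a)
    (hAB : ∀ a ∈ A, ∀ b, G.Adj a b → b ∈ B) : A.card ≤ 2 * k * B.card := by
  have hex : ∀ a : V, ∃ b b' : V, a ∈ A → G.Adj a b ∧ G.Adj a b' ∧ f b < f b' ∧
      σ s(a, b) = σ s(a, b') ∧ (f a < f b ↔ f a < f b') := by
    intro a
    by_cases ha : a ∈ A
    swap
    · exact ⟨a, a, fun h => absurd h ha⟩
    have hc : (Finset.univ : Finset (Fin k × Bool)).card < (G.neighborFinset a).card := by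
      have := hdeg a ha
      simp only [Finset.card_univ, Fintype.card_prod, Fintype.card_fin, Fintype.card_bool,
        card_neighborFinset_eq_degree]
      omega
    obtain ⟨x, hx, y, hy, hxy, he⟩ := Finset.exists_ne_map_eq_of_card_lt_of_maps_to hc
      (f := fun b => (σ s(a, b), decide (f a < f b)))
      (fun _ _ => Finset.mem_coe.2 (Finset.mem_univ _))
    simp only [Prod.mk.injEq, decide_eq_decide] at he
    rw [mem_neighborFinset] at hx hy
    rcases lt_or_gt_of_ne (hf.ne hxy) with hlt | hlt
    · exact ⟨x, y, fun _ => ⟨hx, hy, hlt, he.1, he.2⟩⟩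
    · exact ⟨y, x, fun _ => ⟨hy, hx, hlt, he.1.symm, he.2.symm⟩⟩
  choose b b' hb using hex
  let φ : V → Fin k × Bool × V := fun a => (σ s(a, b a), decide (f a < f (b a)), b a)
  have hcard : ((Finset.univ : Finset (Fin k)) ×ˢ (Finset.univ : Finset Bool) ×ˢ B).card
      = 2 * k * B.card := by
    simp [Finset.card_product]; ring
  rw [← hcard]
  apply Finset.card_le_card_of_injOn φ
  · intro a ha
    simpa [φ, lt_or_ge] using hAB a ha _ (hb a ha).1
  · have key : ∀ x ∈ A, ∀ y ∈ A, σ s(x, b x) = σ s(y, b y) → (f x < f (b x) ↔ f y < f (b y)) →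
        b x = b y → ¬ f x < f y := by
      intro x hx y hy hq ho hxy hlt
      obtain ⟨hx1, hx2, hx3, hx4, hx5⟩ := hb x hx
      obtain ⟨hy1, -, -, -, -⟩ := hb y hy
      by_cases hd : f x < f (b x)
      · have hd' := ho.1 hd
        refine hG x (b' x) y (b y) hx2 hy1 (hx4.symm.trans hq) ⟨hlt, hd', ?_⟩
        rwa [← hxy]
      · have hd' : f (b' x) < f x :=
          lt_of_le_of_ne (not_lt.1 fun h => hd (hx5.2 h)) (hf.ne hx2.ne.symm)
        refine hG (b y) y (b' x) x hy1.symm hx2.symm ?_ ⟨?_, hd', hlt⟩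
        · rw [Sym2.eq_swap, ← hq, hx4, Sym2.eq_swap]
        · rwa [← hxy]
    intro x hx y hy heq
    simp only [φ, Prod.mk.injEq, decide_eq_decide] at heq
    obtain ⟨hq, ho, hxy⟩ := heq
    have h1 := key x hx y hy hq ho hxy
    have h2 := key y hy x hx hq.symm ho.symm hxy.symm
    exact hf (le_antisymm (not_lt.1 h2) (not_lt.1 h1))

open Classical in
/-- A graph with an edge and a `k`-queue layout whose non-isolated vertices all have degree at least
`2k + 1` has an edge with both ends of degree at most `4k(2k+1)`. -/
lemma exists_light_edge_s9 {V : Type*} [Fintype V] {k : ℕ} {f : V → ℕ}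
    (hf : Function.Injective f) {σ : Sym2 V → Fin k} {G : SimpleGraph V}
    (hG : NoNesting f σ G) (hne : ∃ v w, G.Adj v w)
    (hmin : ∀ v w, G.Adj v w → 2 * k < G.degree v) :
    ∃ v w, G.Adj v w ∧ G.degree v ≤ 4 * k * (2 * k + 1) ∧ G.degree w ≤ 4 * k * (2 * k + 1) := by
  by_contra! hcon
  set S := Finset.univ.filter fun v => ∃ w, G.Adj v w with hS
  set A := S.filter fun v => G.degree v ≤ 4 * k * (2 * k + 1) with hA
  set B := S.filter fun v => ¬ G.degree v ≤ 4 * k * (2 * k + 1) with hB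
  have hsum : A.card + B.card = S.card := Finset.card_filter_add_card_filter_not _
  have h1 : A.card ≤ 2 * k * B.card := by
    apply card_le_of_neighbors hf hG A B
    · intro a ha
      simp only [hA, hS, Finset.mem_filter, Finset.mem_univ, true_and] at ha
      obtain ⟨⟨w, hw⟩, -⟩ := ha
      exact hmin a w hw
    · intro a ha b hab
      simp only [hA, Finset.mem_filter] at ha
      simp only [hB, hS, Finset.mem_filter, Finset.mem_univ, true_and]
      exact ⟨⟨a, hab.symm⟩, not_le.2 (hcon a b hab ha.2)⟩
  have h2 : B.card * (4 * k * (2 * k + 1) + 1) ≤ ∑ v, G.degree v := by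
    calc B.card * (4 * k * (2 * k + 1) + 1) ≤ ∑ v ∈ B, G.degree v := by
          rw [← smul_eq_mul]
          apply Finset.card_nsmul_le_sum
          intro v hv
          simp only [hB, Finset.mem_filter] at hv
          omega
      _ ≤ _ := Finset.sum_le_sum_of_subset (Finset.subset_univ _)
  have h3 := sum_degree_le hf hG
  have h4 : S.card ≤ (2 * k + 1) * B.card := by linarith
  have h5 : 4 * k * S.card ≤ 4 * k * ((2 * k + 1) * B.card) := Nat.mul_le_mul_left _ h4
  have h6 : B.card = 0 := by
    have : B.card * (4 * k * (2 * k + 1) + 1) ≤ 4 * k * ((2 * k + 1) * B.card) :=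
      h2.trans (h3.trans h5)
    nlinarith
  have h7 : S.card = 0 := by rw [h6] at h4; omega
  obtain ⟨v, w, hvw⟩ := hne
  have : v ∈ S := by simp only [hS, Finset.mem_filter, Finset.mem_univ, true_and]; exact ⟨w, hvw⟩
  rw [Finset.card_eq_zero] at h7
  simp [h7] at this

open Classical in
/-- Induction on `G`: strip the edges at a vertex of degree at most `2k`, which can then be given
a colour that none of its neighbours has; or delete a light edge, whose ends meet the defect
bound under any colouring because their degrees do. -/
lemma exists_list_coloring {V : Type*} [Fintype V] {k : ℕ} {f : V → ℕ}
    (hf : Function.Injective f) {σ : Sym2 V → Fin k} (L : V → Finset ℕ)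
    (hL : ∀ v, (L v).card = 2 * k + 1) (G : SimpleGraph V) (hG : NoNesting f σ G) :
    ∃ c : V → ℕ, (∀ v, c v ∈ L v) ∧
      ∀ v, {w | G.Adj v w ∧ c w = c v}.ncard ≤ 4 * k * (2 * k + 1) := by
  induction G using WellFoundedLT.induction with
  | ind G ih =>
  by_cases hlow : ∃ v w, G.Adj v w ∧ G.degree v ≤ 2 * k
  · obtain ⟨v, w, hvw, hv⟩ := hlow
    let H : SimpleGraph V :=
      { Adj := fun a b => G.Adj a b ∧ a ≠ v ∧ b ≠ v
        symm := ⟨fun a b h => ⟨h.1.symm, h.2.2, h.2.1⟩⟩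
        loopless := ⟨fun a h => h.1.ne rfl⟩ }
    have hle : H ≤ G := fun a b h => h.1
    have hlt : H < G := lt_of_le_of_ne hle fun h => by
      have : H.Adj v w := by rw [h]; exact hvw
      exact this.2.1 rfl
    obtain ⟨c, hc, hd⟩ := ih H hlt (hG.mono hle)
    have hcol : ((G.neighborFinset v).image c).card < (L v).card := by
      have := Finset.card_image_le (s := G.neighborFinset v) (f := c)
      rw [card_neighborFinset_eq_degree] at this
      rw [hL]; omega
    obtain ⟨x, hx, hxn⟩ := Finset.exists_mem_notMem_of_card_lt_card hcol
    have hxn' : ∀ u, G.Adj v u → c u ≠ x := fun u hu h =>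
      hxn (Finset.mem_image.2 ⟨u, (mem_neighborFinset _ _ _).2 hu, h⟩)
    refine ⟨Function.update c v x, fun u => ?_, fun u => ?_⟩
    · by_cases huv : u = v
      · subst huv; simpa using hx
      · simpa [huv] using hc u
    · refine (Set.ncard_le_ncard ?_ (Set.toFinite _)).trans (hd u)
      rintro z ⟨hz, hcz⟩
      by_cases huv : u = v
      · subst huv
        rw [Function.update_self, Function.update_of_ne hz.ne.symm] at hcz
        exact absurd hcz (hxn' z hz)
      · by_cases hzv : z = v
        · subst hzv
          rw [Function.update_self, Function.update_of_ne huv] at hcz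
          exact absurd hcz.symm (hxn' u hz.symm)
        · rw [Function.update_of_ne huv, Function.update_of_ne hzv] at hcz
          exact ⟨⟨hz, huv, hzv⟩, hcz⟩
  · push Not at hlow
    by_cases hne : ∃ v w, G.Adj v w
    · obtain ⟨v, w, hvw, hv, hw⟩ := exists_light_edge_s9 hf hG hne hlow
      have hle : G.deleteEdges {s(v, w)} ≤ G := deleteEdges_le _
      have hlt : G.deleteEdges {s(v, w)} < G := lt_of_le_of_ne hle fun h => by
        have : (G.deleteEdges {s(v, w)}).Adj v w := by rw [h]; exact hvw
        simp [deleteEdges_adj] at this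
      obtain ⟨c, hc, hd⟩ := ih _ hlt (hG.mono hle)
      refine ⟨c, hc, fun u => ?_⟩
      have hdeg : {z | G.Adj u z ∧ c z = c u}.ncard ≤ G.degree u := by
        rw [← card_neighborFinset_eq_degree, ← Set.ncard_coe_finset]
        refine Set.ncard_le_ncard ?_ (Set.toFinite _)
        rintro z ⟨hz, -⟩
        simpa using hz
      by_cases huv : u = v
      · subst huv; exact hdeg.trans hv
      by_cases huw : u = w
      · subst huw; exact hdeg.trans hw
      refine (Set.ncard_le_ncard ?_ (Set.toFinite _)).trans (hd u)
      rintro z ⟨hz, hcz⟩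
      refine ⟨?_, hcz⟩
      rw [deleteEdges_adj]
      refine ⟨hz, ?_⟩
      simp [huv, huw]
    · push Not at hne
      have hex : ∀ v, ∃ x, x ∈ L v := fun v => by
        have := hL v
        exact Finset.card_pos.1 (by omega)
      choose c hc using hex
      refine ⟨c, hc, fun v => ?_⟩
      simp [hne]

/-- For every integer `k ≥ 1` there exists an integer `d` such that every finite simple graph
admitting a `k`-queue layout is `(2k+1, d)`-choosable. -/
theorem stmt9 (k : ℕ) (hk : 1 ≤ k) :
    ∃ d : ℤ, ∀ (V : Type) [Fintype V] (G : SimpleGraph V),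
      HasQueueLayout G k → Choosable G (2 * k + 1) d := by
  refine ⟨((4 * k * (2 * k + 1) : ℕ) : ℤ), fun V _ G ⟨f, hf, σ, hσ⟩ L hL => ?_⟩
  obtain ⟨c, hc, hd⟩ := exists_list_coloring hf L hL G hσ
  exact ⟨c, hc, fun v => by exact_mod_cast hd v⟩
end
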